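/- Let g be an integer with |g| > 1 which is not a perfect square, and write g = g₀^h with g₀ ∈ ℤ and h ∈ ℕ maximal, and assume h > 1. Let d be the discriminant of ℚ(√g) (i.e. d = g₁ if the squarefree kernel g₁ of g satisfies g₁ ≡ 1 (mod 4), and d = 4g₁ otherwise). Fix an integer k ≥ 0. Then, with the summation ∑' running over those primes p among the first N primes for which the Legendre symbol (g/p) = −1 and gcd(p − 1, h) = 1, the limit as N → ∞ of (∑' p^k φ(p − 1)) / (∑' p^k (p − 1)) exists and equals Ã(g) = Ã_h · Ã_d, where Ã_h = ∏_{p prime, p ∤ h} (1 − 1/(p(p−1))), and Ã_d = 1 if d | h, while otherwise Ã_d = 1 − μ(|d|) · ∏_{q prime, q | d, q | h} 1/(q − 2) · ∏_{q prime, q | d, q ∤ h} 1/(q² − q − 1). -/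

import Mathlib

open Filter


namespace ArtinRatio

section Kernel
open MeasureTheory

/-- The Fejér kernel. -/
noncomputable def fejer (v : ℝ) : ℝ := Real.sinc (v / 2) ^ 2

lemma fejer_nonneg (v : ℝ) : 0 ≤ fejer v := sq_nonneg _

lemma fejer_continuous : Continuous fejer := by
  unfold fejer
  exact (Real.continuous_sinc.comp (continuous_id.div_const 2)).pow 2

lemma fejer_le (v : ℝ) : fejer v ≤ 5 * (1 + v ^ 2)⁻¹ := by
  unfold fejer
  have h1 : Real.sinc (v / 2) ^ 2 ≤ 1 := by
    rw [sq_le_one_iff_abs_le_one]; exact Real.abs_sinc_le_one _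
  have h2 : Real.sinc (v / 2) ^ 2 * v ^ 2 ≤ 4 := by
    by_cases hv : v = 0
    · simp [hv]
    · rw [Real.sinc_of_ne_zero (by simpa using hv)]
      have := Real.sin_sq_le_one (v / 2)
      field_simp
      nlinarith
  rw [← div_eq_mul_inv, le_div_iff₀ (by positivity)]
  nlinarith

lemma fejer_integrable : Integrable fejer := by
  refine Integrable.mono' (integrable_inv_one_add_sq.const_mul 5)
    fejer_continuous.aestronglyMeasurable (Eventually.of_forall fun v => ?_)
  rw [Real.norm_of_nonneg (fejer_nonneg v)]
  exact fejer_le v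

lemma fejer_integral_pos : 0 < ∫ v, fejer v := by
  rw [integral_pos_iff_support_of_nonneg fejer_nonneg fejer_integrable]
  apply IsOpen.measure_pos
  · exact fejer_continuous.isOpen_support
  · exact ⟨0, by simp [fejer]⟩

/-- The tent function. -/
noncomputable def tent (t : ℝ) : ℝ := 1 - |t|

lemma tent_continuous : Continuous tent := by unfold tent; fun_prop

lemma fejer_fourier_real (v : ℝ) : ∫ t in (0:ℝ)..1, 2 * (1 - t) * Real.cos (t * v) = fejer v := by
  by_cases hv : v = 0
  · subst hv
    simp only [mul_zero, Real.cos_zero, mul_one, fejer, zero_div, Real.sinc_zero, one_pow]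
    have : ∀ t ∈ Set.uIcc (0:ℝ) 1, HasDerivAt (fun t : ℝ => 2 * t - t ^ 2) (2 * (1 - t)) t := by
      intro t _
      exact (((hasDerivAt_id t).const_mul 2).sub ((hasDerivAt_id t).pow 2)).congr_deriv
        (by simp; ring)
    rw [intervalIntegral.integral_eq_sub_of_hasDerivAt this
      (Continuous.intervalIntegrable (by fun_prop) _ _)]
    norm_num
  · have : ∀ t ∈ Set.uIcc (0:ℝ) 1, HasDerivAt
        (fun t : ℝ => 2 * (1 - t) * Real.sin (t * v) / v - 2 * Real.cos (t * v) / v ^ 2)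
        (2 * (1 - t) * Real.cos (t * v)) t := by
      intro t _
      have h1 : HasDerivAt (fun t : ℝ => t * v) v t := by
        simpa using (hasDerivAt_id t).mul_const v
      have h2 : HasDerivAt (fun t : ℝ => 2 * (1 - t)) (-2) t := by
        simpa using ((hasDerivAt_id t).const_sub 1).const_mul 2
      have h3 := (h2.mul h1.sin).div_const v
      have h4 := (h1.cos.const_mul 2).div_const (v ^ 2)
      refine (h3.sub h4).congr_deriv ?_
      field_simp
      ring
    rw [intervalIntegral.integral_eq_sub_of_hasDerivAt this
      (Continuous.intervalIntegrable (by fun_prop) _ _)]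
    have hc : Real.cos v = 1 - 2 * Real.sin (v / 2) ^ 2 := by
      have := Real.cos_two_mul (v / 2)
      have h5 := Real.sin_sq_add_cos_sq (v / 2)
      rw [show 2 * (v / 2) = v by ring] at this
      linarith
    simp only [fejer]
    rw [Real.sinc_of_ne_zero (by simpa using hv)]
    simp [hc]
    field_simp
    ring

lemma fejer_fourier (v : ℝ) :
    ∫ t in (-1:ℝ)..1, (tent t : ℂ) * Complex.exp (Complex.I * t * v) = fejer v := by
  have hc : Continuous fun t : ℝ => (tent t : ℂ) * Complex.exp (Complex.I * t * v) := by
    have := tent_continuous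
    fun_prop
  rw [← intervalIntegral.integral_add_adjacent_intervals (b := 0)
    (hc.intervalIntegrable _ _) (hc.intervalIntegrable _ _)]
  have h1 : ∫ t in (-1:ℝ)..0, (tent t : ℂ) * Complex.exp (Complex.I * t * v) =
      ∫ t in (0:ℝ)..1, (tent (-t) : ℂ) * Complex.exp (Complex.I * (-t : ℝ) * v) := by
    rw [intervalIntegral.integral_comp_neg
      (fun t : ℝ => (tent t : ℂ) * Complex.exp (Complex.I * t * v))]
    simp
  have hc2 : Continuous fun t : ℝ =>
      (tent (-t) : ℂ) * Complex.exp (Complex.I * (-t : ℝ) * v) := by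
    have := tent_continuous
    fun_prop
  rw [h1, ← intervalIntegral.integral_add (hc2.intervalIntegrable _ _) (hc.intervalIntegrable _ _),
    ← fejer_fourier_real, ← intervalIntegral.integral_ofReal]
  apply intervalIntegral.integral_congr
  intro t ht
  simp only [Set.uIcc_of_le zero_le_one, Set.mem_Icc] at ht
  simp only [tent, abs_neg, abs_of_nonneg ht.1]
  push_cast
  rw [Complex.cos]
  rw [show Complex.I * -(t:ℂ) * v = -(t * v) * Complex.I by ring,
    show Complex.I * (t:ℂ) * v = (t * v) * Complex.I by ring]
  ring

lemma fejer_neg (v : ℝ) : fejer (-v) = fejer v := by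
  simp [fejer, neg_div, Real.sinc_neg]

end Kernel

section WI
open MeasureTheory

lemma wi_riemann_lebesgue (f : ℝ → ℂ) :
    Tendsto (fun y : ℝ => ∫ t in (-1:ℝ)..1, f t * Complex.exp (Complex.I * t * y)) atTop
      (nhds 0) := by
  have h := Real.tendsto_integral_exp_smul_cocompact (Set.indicator (Set.Ioc (-1:ℝ) 1) f)
  have h2 : Tendsto (fun y : ℝ => -(2 * Real.pi)⁻¹ * y) atTop (cocompact ℝ) := by
    refine Tendsto.mono_right ?_ atBot_le_cocompact
    exact tendsto_id.const_mul_atTop_of_neg (by simp [Real.pi_pos])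
  refine (h.comp h2).congr fun y => ?_
  rw [intervalIntegral.integral_of_le (by norm_num), ← integral_indicator measurableSet_Ioc]
  simp only [Function.comp]
  congr 1
  ext t
  by_cases ht : t ∈ Set.Ioc (-1:ℝ) 1
  · rw [Set.indicator_of_mem ht, Set.indicator_of_mem ht, Circle.smul_def, Real.fourierChar_apply,
      smul_eq_mul, mul_comm]
    congr 2
    have : (Real.pi : ℂ) ≠ 0 := by exact_mod_cast Real.pi_ne_zero
    push_cast
    field_simp
  · rw [Set.indicator_of_notMem ht, Set.indicator_of_notMem ht, smul_zero]

lemma wi_core (D : ℝ → ℝ) (hDm : Measurable D) (M : ℝ) (hM : ∀ u, |D u| ≤ M)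
    (G : ℂ → ℂ) (hG : ContinuousOn G {s | 0 ≤ s.re})
    (hDG : ∀ s : ℂ, 0 < s.re → ∫ u in Set.Ioi (0:ℝ), (D u : ℂ) * Complex.exp (-(s * u)) = G s) :
    Tendsto (fun y => ∫ u in Set.Ioi (0:ℝ), D u * fejer (y - u)) atTop (nhds 0) := by
  have hM0 : 0 ≤ M := (abs_nonneg _).trans (hM 0)
  have hDc : Measurable fun u => (D u : ℂ) := Complex.measurable_ofReal.comp hDm
  have hfi : ∀ y, Integrable (fun u => fejer (y - u)) := fun y => fejer_integrable.comp_sub_left y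
  have hfc : ∀ y, Continuous (fun u => (fejer (y - u) : ℂ)) := fun y =>
    Complex.continuous_ofReal.comp (fejer_continuous.comp (continuous_const.sub continuous_id))
  -- the identity for positive σ
  have key : ∀ y σ : ℝ, 0 < σ →
      ∫ t in (-1:ℝ)..1, (tent t : ℂ) * G (σ + Complex.I * t) * Complex.exp (Complex.I * t * y) =
      ∫ u in Set.Ioi (0:ℝ), (D u : ℂ) * Complex.exp (-(σ * u)) * fejer (y - u) := by
    intro y σ hσ
    have e1 : ∀ t : ℝ, (tent t : ℂ) * G (σ + Complex.I * t) * Complex.exp (Complex.I * t * y) =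
        ∫ u in Set.Ioi (0:ℝ), (D u : ℂ) * Complex.exp (-(σ * u)) *
          ((tent t : ℂ) * Complex.exp (Complex.I * t * (y - u : ℝ))) := by
      intro t
      rw [← hDG (σ + Complex.I * t) (by simp [hσ]), mul_right_comm, ← integral_const_mul]
      congr 1
      ext u
      rw [show Complex.I * t * (y - u : ℝ) = Complex.I * t * y + -(Complex.I * t * u) by
        push_cast; ring, Complex.exp_add,
        show -((σ + Complex.I * t) * u) = -(σ * u) + -(Complex.I * t * u) by ring, Complex.exp_add]
      ring
    simp_rw [e1]
    rw [intervalIntegral.integral_of_le (by norm_num), integral_integral_swap]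
    · congr 1
      ext u
      rw [integral_const_mul, ← intervalIntegral.integral_of_le (by norm_num), fejer_fourier]
    · have hexp : IntegrableOn (fun u : ℝ => M * Real.exp (-σ * u)) (Set.Ioi 0) :=
        (integrableOn_exp_mul_Ioi (by linarith) 0).const_mul M
      have hone : IntegrableOn (fun _ : ℝ => (1:ℝ)) (Set.Ioc (-1:ℝ) 1) := by
        simp
      have hprod := Integrable.mul_prod hone hexp
      refine Integrable.mono' hprod ?_ ?_
      · apply AEStronglyMeasurable.mul
        · apply Measurable.aestronglyMeasurable
          exact (hDc.comp measurable_snd).mul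
            ((by fun_prop : Continuous fun u : ℝ => Complex.exp (-(σ * u))).measurable.comp
              measurable_snd)
        · apply Continuous.aestronglyMeasurable
          have := tent_continuous
          fun_prop
      · rw [Measure.prod_restrict]
        refine (ae_restrict_iff' (measurableSet_Ioc.prod measurableSet_Ioi)).2
          (Eventually.of_forall ?_)
        rintro ⟨t, u⟩ ⟨ht, hu⟩
        simp only [Set.mem_Ioc] at ht
        simp only [Function.uncurry]
        rw [norm_mul, norm_mul, norm_mul, Complex.norm_exp, Complex.norm_exp]
        have a1 : ‖(D u : ℂ)‖ ≤ M := by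
          rw [Complex.norm_real]; exact hM u
        have a2 : ‖(tent t : ℂ)‖ ≤ 1 := by
          rw [Complex.norm_real, Real.norm_eq_abs, tent]
          have : |t| ≤ 1 := abs_le.2 ⟨by linarith, by linarith⟩
          rw [abs_of_nonneg (by linarith)]
          linarith [abs_nonneg t]
        have a3 : (Complex.I * t * (y - u : ℝ)).re = 0 := by simp
        have a4 : (-((σ:ℂ) * u)).re = -σ * u := by simp
        rw [a3, a4, Real.exp_zero, mul_one, one_mul]
        calc ‖(D u : ℂ)‖ * Real.exp (-σ * u) * ‖(tent t : ℂ)‖ ≤ M * Real.exp (-σ * u) * 1 := by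
              gcongr
          _ = _ := by ring
  -- let σ → 0
  have lim : ∀ y : ℝ,
      ∫ t in (-1:ℝ)..1, (tent t : ℂ) * G (Complex.I * t) * Complex.exp (Complex.I * t * y) =
      ((∫ u in Set.Ioi (0:ℝ), D u * fejer (y - u) : ℝ) : ℂ) := by
    intro y
    have hcomp : IsCompact ((fun z : ℝ × ℝ => (z.1 : ℂ) + Complex.I * z.2) ''
        (Set.Icc 0 1 ×ˢ Set.Icc (-1) 1)) :=
      (isCompact_Icc.prod isCompact_Icc).image (by fun_prop)
    obtain ⟨C, hC⟩ := hcomp.exists_bound_of_continuousOn (hG.mono (by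
      rintro _ ⟨z, hz, rfl⟩
      simpa using hz.1.1))
    have hC' : ∀ σ t : ℝ, 0 ≤ σ → σ ≤ 1 → -1 ≤ t → t ≤ 1 → ‖G (σ + Complex.I * t)‖ ≤ C :=
      fun σ t h1 h2 h3 h4 => hC _ ⟨(σ, t), ⟨⟨h1, h2⟩, ⟨h3, h4⟩⟩, rfl⟩
    have hnear : ∀ᶠ σ : ℝ in nhdsWithin 0 (Set.Ioi 0), 0 < σ ∧ σ ≤ 1 := by
      filter_upwards [self_mem_nhdsWithin, mem_nhdsWithin_of_mem_nhds (Iic_mem_nhds zero_lt_one)]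
        with σ h1 h2 using ⟨h1, h2⟩
    have L1 : Tendsto (fun σ : ℝ => ∫ t in (-1:ℝ)..1,
        (tent t : ℂ) * G (σ + Complex.I * t) * Complex.exp (Complex.I * t * y))
        (nhdsWithin 0 (Set.Ioi 0))
        (nhds (∫ t in (-1:ℝ)..1,
          (tent t : ℂ) * G (Complex.I * t) * Complex.exp (Complex.I * t * y))) := by
      simp_rw [intervalIntegral.integral_of_le (show (-1:ℝ) ≤ 1 by norm_num)]
      refine tendsto_integral_filter_of_dominated_convergence (fun _ => C) ?_ ?_ ?_ ?_
      · filter_upwards [hnear] with σ hσ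
        apply Continuous.aestronglyMeasurable
        have h1 := tent_continuous
        have h2 : Continuous fun t : ℝ => G (σ + Complex.I * t) := by
          refine hG.comp_continuous (by fun_prop) (fun t => ?_)
          simpa using hσ.1.le
        exact ((Complex.continuous_ofReal.comp h1).mul h2).mul (by fun_prop)
      · filter_upwards [hnear] with σ hσ
        refine (ae_restrict_iff' measurableSet_Ioc).2 (Eventually.of_forall fun t ht => ?_)
        rw [norm_mul, norm_mul, Complex.norm_exp]
        have a2 : ‖(tent t : ℂ)‖ ≤ 1 := by
          rw [Complex.norm_real, Real.norm_eq_abs, tent]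
          have : |t| ≤ 1 := abs_le.2 ⟨by linarith [ht.1], by linarith [ht.2]⟩
          rw [abs_of_nonneg (by linarith)]
          linarith [abs_nonneg t]
        have a3 : (Complex.I * t * y).re = 0 := by simp
        have a4 := hC' σ t hσ.1.le hσ.2 ht.1.le ht.2
        rw [a3, Real.exp_zero, mul_one]
        calc _ ≤ 1 * C := by gcongr
          _ = C := one_mul C
      · simp
      · refine Eventually.of_forall fun t => ?_
        refine Tendsto.mul_const _ (Tendsto.const_mul _ ?_)
        have h2 : ContinuousWithinAt (fun σ : ℝ => G (σ + Complex.I * t)) (Set.Ici 0) 0 := by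
          have := hG (Complex.I * t) (by simp)
          refine ContinuousWithinAt.comp (t := {s : ℂ | 0 ≤ s.re}) ?_ ?_ ?_
          · simpa using this
          · fun_prop
          · intro σ hσ
            simpa using hσ
        have h3 := h2.mono Set.Ioi_subset_Ici_self
        simpa [ContinuousWithinAt] using h3
    have L2 : Tendsto (fun σ : ℝ => ∫ u in Set.Ioi (0:ℝ),
        (D u : ℂ) * Complex.exp (-(σ * u)) * fejer (y - u))
        (nhdsWithin 0 (Set.Ioi 0))
        (nhds (∫ u in Set.Ioi (0:ℝ), (D u : ℂ) * fejer (y - u))) := by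
      refine tendsto_integral_filter_of_dominated_convergence (fun u => M * fejer (y - u)) ?_ ?_ ?_ ?_
      · refine Eventually.of_forall fun σ => Measurable.aestronglyMeasurable ?_
        exact (hDc.mul (by fun_prop : Continuous fun u : ℝ =>
          Complex.exp (-(σ * u))).measurable).mul (hfc y).measurable
      · filter_upwards [hnear] with σ hσ
        refine (ae_restrict_iff' measurableSet_Ioi).2 (Eventually.of_forall fun u hu => ?_)
        rw [norm_mul, norm_mul, Complex.norm_exp, Complex.norm_real, Complex.norm_real,
          Real.norm_of_nonneg (fejer_nonneg _)]
        have a4 : (-((σ:ℂ) * u)).re = -(σ * u) := by simp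
        have a5 : Real.exp (-(σ * u)) ≤ 1 := by
          rw [Real.exp_le_one_iff]
          have : 0 < σ * u := mul_pos hσ.1 hu
          linarith
        rw [a4]
        have := fejer_nonneg (y - u)
        have a1 : ‖D u‖ ≤ M := hM u
        calc _ ≤ M * 1 * fejer (y - u) := by gcongr
          _ = _ := by ring
      · exact ((hfi y).const_mul M).integrableOn
      · refine Eventually.of_forall fun u => ?_
        refine Tendsto.mul_const _ ?_
        have : Continuous fun σ : ℝ => (D u : ℂ) * Complex.exp (-(σ * u)) := by fun_prop
        have h3 := (this.tendsto 0).mono_left (nhdsWithin_le_nhds (s := Set.Ioi 0))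
        simpa using h3
    have L3 := tendsto_nhds_unique (L1.congr' (by
      filter_upwards [hnear] with σ hσ using key y σ hσ.1)) L2
    rw [L3, ← integral_complex_ofReal]
    simp
  have := wi_riemann_lebesgue (fun t : ℝ => (tent t : ℂ) * G (Complex.I * t))
  simp_rw [lim] at this
  have h2 := (Complex.continuous_re.tendsto 0).comp this
  simpa [Function.comp_def] using h2

end WI

end ArtinRatio


namespace ArtinRatio

section Tauber
open MeasureTheory

lemma wi_scaled (B : ℝ → ℝ) (hBm : Measurable B) (M : ℝ) (hB0 : ∀ u, 0 ≤ B u) (hM : ∀ u, B u ≤ M)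
    (hBneg : ∀ u ≤ 0, B u = 0) (A : ℝ)
    (G : ℂ → ℂ) (hG : ContinuousOn G {s | 0 ≤ s.re})
    (hDG : ∀ s : ℂ, 0 < s.re →
      ∫ u in Set.Ioi (0:ℝ), ((B u - A : ℝ) : ℂ) * Complex.exp (-(s * u)) = G s)
    (ε : ℝ) (hε : 0 < ε) :
    Tendsto (fun y => ∫ u, B (ε * u) * fejer (y - u)) atTop (nhds (A * ∫ v, fejer v)) := by
  have hεc : (ε : ℂ) ≠ 0 := by exact_mod_cast hε.ne'
  have h1 := wi_core (fun u => B (ε * u) - A) ((hBm.comp (measurable_const_mul ε)).sub_const A)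
    (M + |A|) (fun u => by
      calc |B (ε * u) - A| ≤ |B (ε * u)| + |A| := abs_sub _ _
        _ ≤ _ := by rw [abs_of_nonneg (hB0 _)]; gcongr; exact hM _)
    (fun s => (ε : ℂ)⁻¹ * G (s / ε)) (by
      refine continuousOn_const.mul (hG.comp (by fun_prop) ?_)
      intro s hs
      simp only [Set.mem_ofPred_eq] at hs ⊢
      rw [Complex.div_ofReal_re]
      positivity) (by
      intro s hs
      have := integral_comp_mul_left_Ioi
        (fun u : ℝ => ((B u - A : ℝ) : ℂ) * Complex.exp (-(s / ε * u))) 0 hε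
      rw [mul_zero, hDG (s / ε) (by rw [Complex.div_ofReal_re]; positivity)] at this
      rw [Complex.real_smul, Complex.ofReal_inv] at this
      rw [← this]
      congr 1
      ext u
      congr 3
      push_cast
      field_simp)
  have h2 : Tendsto (fun y => ∫ u in Set.Ioi (0:ℝ), fejer (y - u)) atTop (nhds (∫ v, fejer v)) := by
    have h3 := (aecover_Iio (μ := (volume : Measure ℝ)) (tendsto_id (α := ℝ) (x := atTop))).integral_tendsto_of_countably_generated
      fejer_integrable
    refine h3.congr fun y => ?_
    rw [← integral_indicator measurableSet_Iio, ← integral_indicator measurableSet_Ioi,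
      ← integral_sub_left_eq_self _ _ y]
    congr 1
    ext u
    simp only [Set.indicator, Set.mem_Iio, id, Set.mem_Ioi]
    congr 1
    simp
  have hIntg : ∀ y, Integrable (fun u => B (ε * u) * fejer (y - u)) := fun y => by
    refine Integrable.mono' ((fejer_integrable.comp_sub_left y).const_mul M)
      ((hBm.comp (measurable_const_mul ε)).mul (fejer_continuous.measurable.comp
        (measurable_const.sub measurable_id))).aestronglyMeasurable
      (Eventually.of_forall fun u => ?_)
    rw [norm_mul, Real.norm_of_nonneg (fejer_nonneg _), Real.norm_of_nonneg (hB0 _)]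
    exact mul_le_mul_of_nonneg_right (hM _) (fejer_nonneg _)
  have h4 := h1.add (h2.const_mul A)
  rw [zero_add] at h4
  refine h4.congr fun y => ?_
  rw [← integral_const_mul, ← integral_add]
  · rw [← integral_indicator measurableSet_Ioi]
    congr 1
    ext u
    by_cases hu : 0 < u
    · simp [Set.indicator, hu]; ring
    · have := hBneg (ε * u) (mul_nonpos_of_nonneg_of_nonpos hε.le (not_lt.1 hu))
      simp [Set.indicator, hu, this]
  · simp_rw [sub_mul]
    exact ((hIntg y).sub ((fejer_integrable.comp_sub_left y).const_mul A)).integrableOn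
  · exact ((fejer_integrable.comp_sub_left y).const_mul A).integrableOn

lemma wi_tauber (B : ℝ → ℝ) (hBm : Measurable B) (M : ℝ) (hB0 : ∀ u, 0 ≤ B u) (hM : ∀ u, B u ≤ M)
    (hBneg : ∀ u ≤ 0, B u = 0) (hmono : Monotone fun u => Real.exp u * B u) (A : ℝ)
    (G : ℂ → ℂ) (hG : ContinuousOn G {s | 0 ≤ s.re})
    (hDG : ∀ s : ℂ, 0 < s.re →
      ∫ u in Set.Ioi (0:ℝ), ((B u - A : ℝ) : ℂ) * Complex.exp (-(s * u)) = G s) :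
    Tendsto B atTop (nhds A) := by
  set c := ∫ v, fejer v with hc
  have hcpos : 0 < c := fejer_integral_pos
  have hM0 : 0 ≤ M := (hB0 0).trans (hM 0)
  have hIntg : ∀ ε y, Integrable (fun u => B (ε * u) * fejer (y - u)) := fun ε y => by
    refine Integrable.mono' ((fejer_integrable.comp_sub_left y).const_mul M)
      ((hBm.comp (measurable_const_mul ε)).mul (fejer_continuous.measurable.comp
        (measurable_const.sub measurable_id))).aestronglyMeasurable
      (Eventually.of_forall fun u => ?_)
    rw [norm_mul, Real.norm_of_nonneg (fejer_nonneg _), Real.norm_of_nonneg (hB0 _)]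
    exact mul_le_mul_of_nonneg_right (hM _) (fejer_nonneg _)
  let cR : ℝ → ℝ := fun R => ∫ v in Set.Icc (-R) R, fejer v
  have hcR : Tendsto cR atTop (nhds c) :=
    (aecover_Icc (μ := (volume : Measure ℝ)) tendsto_neg_atTop_atBot
      tendsto_id).integral_tendsto_of_countably_generated fejer_integrable
  -- shifting
  have hshift : ∀ w R, ∫ u in Set.Icc (w - R) (w + R), fejer (w - u) = cR R := by
    intro w R
    simp only [cR]
    rw [← integral_indicator measurableSet_Icc, ← integral_indicator measurableSet_Icc,
      ← integral_sub_left_eq_self _ _ w]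
    congr 1
    ext u
    simp only [Set.indicator, Set.mem_Icc]
    have : (w - R ≤ w - u ∧ w - u ≤ w + R) ↔ (-R ≤ u ∧ u ≤ R) := by
      constructor <;> rintro ⟨h1, h2⟩ <;> constructor <;> linarith
    simp [sub_sub_cancel, and_comm]
    congr 1
    simp
    constructor <;> intro h <;> constructor <;> linarith [h.1, h.2]
  have hexpB : ∀ x y, x ≤ y → B x ≤ Real.exp (y - x) * B y := by
    intro x y hxy
    have := hmono hxy
    simp only at this
    rw [Real.exp_sub, div_mul_eq_mul_div, le_div_iff₀ (Real.exp_pos _)]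
    linarith
  have upper : ∀ ε R y, 0 < ε → 0 < R →
      B (ε * y) * cR R ≤ Real.exp (2 * ε * R) * ∫ u, B (ε * u) * fejer (y + R - u) := by
    intro ε R y hε hR
    rw [← hshift (y + R) R, ← integral_const_mul, ← integral_const_mul]
    refine le_trans ?_ (setIntegral_le_integral (s := Set.Icc (y + R - R) (y + R + R))
      ((hIntg ε (y + R)).const_mul _) (Eventually.of_forall fun u => ?_))
    · refine setIntegral_mono_on ?_ ?_ measurableSet_Icc fun u hu => ?_
      · exact ((fejer_integrable.comp_sub_left _).const_mul _).integrableOn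
      · exact ((hIntg ε (y + R)).const_mul _).integrableOn
      · have h1 : y ≤ u := by linarith [hu.1]
        have h2 : u ≤ y + 2 * R := by linarith [hu.2]
        have h3 := hexpB (ε * y) (ε * u) (by gcongr)
        have h4 : Real.exp (ε * u - ε * y) ≤ Real.exp (2 * ε * R) := by
          rw [Real.exp_le_exp]; nlinarith
        have h5 := fejer_nonneg (y + R - u)
        have h6 := hB0 (ε * u)
        rw [← mul_assoc]
        apply mul_le_mul_of_nonneg_right _ h5
        exact h3.trans (mul_le_mul_of_nonneg_right h4 h6)
    · exact mul_nonneg (Real.exp_pos _).le (mul_nonneg (hB0 _) (fejer_nonneg _))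
  have lower : ∀ ε R y, 0 < ε → 0 < R →
      ∫ u, B (ε * u) * fejer (y - R - u) ≤
        Real.exp (2 * ε * R) * B (ε * y) * c + M * (c - cR R) := by
    intro ε R y hε hR
    have hfi := fejer_integrable.comp_sub_left (y - R)
    have hc' : c = ∫ u, fejer (y - R - u) := (integral_sub_left_eq_self _ _ _).symm
    have e1 : c - cR R = ∫ u in (Set.Icc (y - R - R) (y - R + R))ᶜ, fejer (y - R - u) := by
      rw [setIntegral_compl measurableSet_Icc hfi, hshift, ← hc']
    rw [e1, ← integral_add_compl (s := Set.Icc (y - R - R) (y - R + R)) measurableSet_Icc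
      (hIntg ε (y - R))]
    refine add_le_add ?_ ?_
    · calc _ ≤ ∫ u in Set.Icc (y - R - R) (y - R + R),
            Real.exp (2 * ε * R) * B (ε * y) * fejer (y - R - u) := by
            refine setIntegral_mono_on (hIntg ε _).integrableOn (hfi.const_mul _).integrableOn
              measurableSet_Icc fun u hu => ?_
            have h1 : u ≤ y := by linarith [hu.2]
            have h2 : y - 2 * R ≤ u := by linarith [hu.1]
            have h3 := hexpB (ε * u) (ε * y) (by gcongr)
            have h4 : Real.exp (ε * y - ε * u) ≤ Real.exp (2 * ε * R) := by
              rw [Real.exp_le_exp]; nlinarith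
            exact mul_le_mul_of_nonneg_right
              (h3.trans (mul_le_mul_of_nonneg_right h4 (hB0 _))) (fejer_nonneg _)
        _ ≤ ∫ u, Real.exp (2 * ε * R) * B (ε * y) * fejer (y - R - u) := by
            refine setIntegral_le_integral (hfi.const_mul _) (Eventually.of_forall fun u => ?_)
            exact mul_nonneg (mul_nonneg (Real.exp_pos _).le (hB0 _)) (fejer_nonneg _)
        _ = _ := by rw [integral_const_mul, ← hc']
    · rw [← integral_const_mul]
      refine setIntegral_mono_on (hIntg ε _).integrableOn (hfi.const_mul _).integrableOn
        measurableSet_Icc.compl fun u hu => ?_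
      exact mul_le_mul_of_nonneg_right (hM _) (fejer_nonneg _)
  have Ilim := fun ε hε => wi_scaled B hBm M hB0 hM hBneg A G hG hDG ε hε
  rw [tendsto_order]
  have push : ∀ (ε : ℝ) (P : ℝ → Prop), 0 < ε → (∀ᶠ y in atTop, P (ε * y)) →
      ∀ᶠ u in atTop, P u := by
    intro ε P hε h
    have : Tendsto (fun u : ℝ => ε⁻¹ * u) atTop atTop :=
      tendsto_id.const_mul_atTop (inv_pos.2 hε)
    filter_upwards [this.eventually h] with u hu
    rwa [mul_inv_cancel_left₀ hε.ne'] at hu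
  have hexplim : ∀ R : ℝ, Tendsto (fun ε => Real.exp (2 * ε * R)) (nhdsWithin 0 (Set.Ioi 0))
      (nhds 1) := by
    intro R
    have : Continuous fun ε => Real.exp (2 * ε * R) := by fun_prop
    simpa using (this.tendsto 0).mono_left (nhdsWithin_le_nhds (s := Set.Ioi 0))
  constructor
  · intro a ha
    have t1 : Tendsto (fun R => A * c - M * (c - cR R)) atTop (nhds (A * c - M * (c - c))) :=
      tendsto_const_nhds.sub ((tendsto_const_nhds.sub hcR).const_mul M)
    have t2 := t1.eventually (lt_mem_nhds (a := a * c) (by nlinarith))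
    obtain ⟨R, hR1, hR2⟩ := (t2.and (eventually_gt_atTop 0)).exists
    have t3 : Tendsto (fun ε => Real.exp (2 * ε * R) * (a * c)) (nhdsWithin 0 (Set.Ioi 0))
        (nhds (1 * (a * c))) := (hexplim R).mul_const _
    obtain ⟨ε, hε1, hε2⟩ := ((t3.eventually (gt_mem_nhds
      (show 1 * (a * c) < A * c - M * (c - cR R) by linarith))).and
      self_mem_nhdsWithin).exists
    have hε2' : 0 < ε := hε2
    refine push ε _ hε2' ?_
    have t4 : Tendsto (fun y => ∫ u, B (ε * u) * fejer (y - R - u)) atTop (nhds (A * c)) :=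
      (Ilim ε hε2').comp (tendsto_atTop_add_const_right _ (-R) tendsto_id)
    have t5 := t4.eventually (lt_mem_nhds
      (show Real.exp (2 * ε * R) * (a * c) + M * (c - cR R) < A * c by linarith))
    filter_upwards [t5] with y hy
    have h1 := lower ε R y hε2' hR2
    have h2 : Real.exp (2 * ε * R) * (a * c) < Real.exp (2 * ε * R) * (B (ε * y) * c) := by linarith
    exact lt_of_mul_lt_mul_right (lt_of_mul_lt_mul_left h2 (Real.exp_pos _).le) hcpos.le
  · intro a ha
    have t1 : Tendsto (fun R => a * cR R) atTop (nhds (a * c)) := hcR.const_mul a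
    have t2 := t1.eventually (lt_mem_nhds (a := A * c) (by nlinarith))
    obtain ⟨R, ⟨hR1, hR2⟩, hR3⟩ := ((t2.and (eventually_gt_atTop 0)).and
      (hcR.eventually (lt_mem_nhds hcpos))).exists
    have t3 : Tendsto (fun ε => Real.exp (2 * ε * R) * (A * c)) (nhdsWithin 0 (Set.Ioi 0))
        (nhds (1 * (A * c))) := (hexplim R).mul_const _
    obtain ⟨ε, hε1, hε2⟩ := ((t3.eventually (gt_mem_nhds (by linarith : 1 * (A * c) < a * cR R))).and
      self_mem_nhdsWithin).exists
    have hε2' : 0 < ε := hε2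
    refine push ε _ hε2' ?_
    have t4 : Tendsto (fun y => Real.exp (2 * ε * R) * ∫ u, B (ε * u) * fejer (y + R - u)) atTop
        (nhds (Real.exp (2 * ε * R) * (A * c))) :=
      ((Ilim ε hε2').comp (tendsto_atTop_add_const_right _ R tendsto_id)).const_mul _
    have t5 := t4.eventually (gt_mem_nhds hε1)
    filter_upwards [t5] with y hy
    have h1 := upper ε R y hε2' hR2
    exact lt_of_mul_lt_mul_right (h1.trans_lt hy) hR3.le

end Tauber

end ArtinRatio


namespace ArtinRatio

section PNT
open MeasureTheory ArithmeticFunction ArithmeticFunction.vonMangoldt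

/-- The prime number theorem in arithmetic progressions, in terms of `ψ`. -/
theorem psi_ap {q : ℕ} [NeZero q] {a : ZMod q} (ha : IsUnit a) :
    Tendsto (fun x : ℝ => (∑ n ∈ Finset.Icc 1 ⌊x⌋₊, residueClass a n) / x) atTop
      (nhds (q.totient : ℝ)⁻¹) := by
  set S : ℝ → ℝ := fun x => ∑ n ∈ Finset.Icc 1 ⌊x⌋₊, residueClass a n with hS
  set A : ℝ := (q.totient : ℝ)⁻¹ with hA
  have hSmono : Monotone S := by
    intro x y hxy
    apply Finset.sum_le_sum_of_subset_of_nonneg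
    · exact Finset.Icc_subset_Icc le_rfl (Nat.floor_mono hxy)
    · intro i _ _; exact residueClass_nonneg a i
  have hS0 : ∀ x, 0 ≤ S x := fun x => Finset.sum_nonneg fun i _ => residueClass_nonneg a i
  have hSle : ∀ x, 0 ≤ x → S x ≤ (Real.log 4 + 4) * x := by
    intro x hx
    refine le_trans ?_ (Chebyshev.psi_le_const_mul_self hx)
    rw [Chebyshev.psi]
    apply Finset.sum_le_sum
    intro i _
    exact residueClass_le a i
  set B : ℝ → ℝ := fun u => S (Real.exp u) * Real.exp (-u) with hB
  have hBneg : ∀ u ≤ 0, B u = 0 := by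
    intro u hu
    have : S (Real.exp u) = 0 := by
      apply Finset.sum_eq_zero
      intro n hn
      rw [Finset.mem_Icc] at hn
      have h1 : ⌊Real.exp u⌋₊ ≤ 1 := by
        have := Nat.floor_mono (Real.exp_le_one_iff.2 hu)
        simpa using this
      have : n = 1 := by omega
      subst this
      simp [residueClass]
    simp [hB, this]
  have hBm : Measurable B :=
    (hSmono.comp Real.exp_monotone).measurable.mul (by fun_prop)
  have hmono : Monotone fun u => Real.exp u * B u := by
    have : (fun u => Real.exp u * B u) = S ∘ Real.exp := by
      ext u
      simp only [hB, Function.comp]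
      rw [mul_comm, mul_assoc, ← Real.exp_add]; simp
    rw [this]
    exact hSmono.comp Real.exp_monotone
  have hB0 : ∀ u, 0 ≤ B u := fun u => mul_nonneg (hS0 _) (Real.exp_pos _).le
  have hM : ∀ u, B u ≤ Real.log 4 + 4 := by
    intro u
    calc B u ≤ (Real.log 4 + 4) * Real.exp u * Real.exp (-u) :=
          mul_le_mul_of_nonneg_right (hSle _ (Real.exp_pos _).le) (Real.exp_pos _).le
      _ = _ := by rw [mul_assoc, ← Real.exp_add]; simp
  have hbigO : (fun n : ℕ => ∑ k ∈ Finset.Icc 1 n, residueClass a k) =O[atTop]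
      fun n => (n : ℝ) ^ (1:ℝ) := by
    refine Asymptotics.IsBigO.of_bound (Real.log 4 + 4) (Eventually.of_forall fun n => ?_)
    have := hSle n (Nat.cast_nonneg n)
    have h0 := hS0 n
    simp only [hS, Nat.floor_natCast] at this h0
    rw [Real.norm_of_nonneg h0, Real.rpow_one, Real.norm_of_nonneg (Nat.cast_nonneg n)]
    exact this
  have hIntg : ∀ s : ℂ, 0 < s.re →
      ∫ u in Set.Ioi (0:ℝ), (B u : ℂ) * Complex.exp (-(s * u)) =
      LSeries (fun n => (residueClass a n : ℂ)) (s + 1) / (s + 1) := by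
    intro s hs
    have hs1 : s + 1 ≠ 0 := by
      intro h
      have := congrArg Complex.re h
      simp at this
      linarith
    rw [LSeries_eq_mul_integral_of_nonneg _ zero_le_one (by simpa using hs) hbigO
      (residueClass_nonneg a), mul_div_cancel_left₀ _ hs1]
    have himg : Real.exp '' Set.Ioi 0 = Set.Ioi 1 := by
      ext x
      constructor
      · rintro ⟨u, hu, rfl⟩
        exact Real.one_lt_exp_iff.2 hu
      · intro hx
        exact ⟨Real.log x, Real.log_pos hx, Real.exp_log (zero_lt_one.trans hx)⟩
    rw [← himg, integral_image_eq_integral_abs_deriv_smul measurableSet_Ioi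
      (fun x _ => (Real.hasDerivAt_exp x).hasDerivWithinAt) Real.exp_injective.injOn]
    congr 1
    ext u
    simp only [hB, hS]
    rw [abs_of_pos (Real.exp_pos _), Complex.real_smul]
    rw [Complex.cpow_def_of_ne_zero (by exact_mod_cast (Real.exp_pos u).ne'),
      ← Complex.ofReal_log (Real.exp_pos u).le, Real.log_exp]
    push_cast
    rw [mul_comm (Complex.exp u), mul_assoc, mul_assoc, ← Complex.exp_add, ← Complex.exp_add]
    congr 2
    ring
  have hfin := wi_tauber B hBm (Real.log 4 + 4) hB0 hM hBneg hmono A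
    (fun s => (LFunctionResidueClassAux a (s + 1) - A) / (s + 1)) (by
      refine ContinuousOn.div ?_ (by fun_prop) ?_
      · refine ContinuousOn.sub ?_ continuousOn_const
        refine (continuousOn_LFunctionResidueClassAux a).comp (by fun_prop) ?_
        intro s hs
        simp only [Set.mem_ofPred_eq] at hs ⊢
        simpa using hs
      · intro s hs h
        have := congrArg Complex.re h
        simp only [Set.mem_ofPred_eq] at hs
        simp at this
        linarith) (by
      intro s hs
      have hs0 : s ≠ 0 := by rintro rfl; simp at hs
      have hs1 : s + 1 ≠ 0 := by
        intro h
        have := congrArg Complex.re h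
        simp at this
        linarith
      have e1 : LFunctionResidueClassAux a (s + 1) = _ :=
        eqOn_LFunctionResidueClassAux ha (x := s + 1) (by simpa using hs)
      have hexp : IntegrableOn (fun u : ℝ => Complex.exp (-(s * u))) (Set.Ioi 0) := by
        have := integrableOn_exp_mul_complex_Ioi (a := -s) (by simpa using hs) 0
        simpa [neg_mul] using this
      simp_rw [Complex.ofReal_sub, sub_mul]
      rw [integral_sub, hIntg s hs, integral_const_mul]
      · have e2 := integral_exp_mul_complex_Ioi (a := -s) (by simpa using hs) 0
        simp only [neg_mul] at e2
        rw [e2, e1]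
        simp only [hA, Complex.ofReal_zero, mul_zero, neg_zero, Complex.exp_zero, add_sub_cancel_right]
        push_cast
        field_simp
        ring
      · refine Integrable.mono' ((integrableOn_exp_mul_Ioi (a := -s.re) (by linarith) 0).const_mul
          (Real.log 4 + 4)) ?_ (Eventually.of_forall fun u => ?_)
        · exact ((Complex.measurable_ofReal.comp hBm).mul
            (by fun_prop : Continuous fun u : ℝ =>
              Complex.exp (-(s * u))).measurable).aestronglyMeasurable
        · rw [norm_mul, Complex.norm_exp, Complex.norm_real, Real.norm_of_nonneg (hB0 u)]
          have : (-(s * u)).re = -s.re * u := by simp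
          rw [this]
          exact mul_le_mul_of_nonneg_right (hM u) (Real.exp_pos _).le
      · exact hexp.const_mul _)
  refine (hfin.comp Real.tendsto_log_atTop).congr' ?_
  filter_upwards [eventually_gt_atTop 0] with x hx
  simp only [hB, Function.comp, Real.exp_log hx, Real.exp_neg]
  rw [div_eq_mul_inv]

/-- indicator-weighted log on primes -/
noncomputable def thetaClass {q : ℕ} (a : ZMod q) (n : ℕ) : ℝ :=
  open Classical in if n.Prime ∧ (n : ZMod q) = a then Real.log n else 0

theorem theta_ap {q : ℕ} [NeZero q] {a : ZMod q} (ha : IsUnit a) :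
    Tendsto (fun N : ℕ => (∑ n ∈ Finset.range (N + 1), thetaClass a n) / N) atTop
      (nhds (q.totient : ℝ)⁻¹) := by
  have h1 := (psi_ap ha).comp tendsto_natCast_atTop_atTop
  have h2 : Tendsto (fun N : ℕ => 2 * (Real.sqrt N * Real.log N) / N) atTop (nhds 0) := by
    have : Tendsto (fun x : ℝ => 2 * (Real.log x / x ^ (1/2:ℝ))) atTop (nhds (2 * 0)) :=
      (isLittleO_log_rpow_atTop (by norm_num : (0:ℝ) < 1/2)).tendsto_div_nhds_zero.const_mul 2
    rw [mul_zero] at this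
    refine (this.comp tendsto_natCast_atTop_atTop).congr' ?_
    filter_upwards [eventually_gt_atTop 0] with N hN
    have hN' : (0:ℝ) < N := by exact_mod_cast hN
    simp only [Function.comp]
    rw [← Real.sqrt_eq_rpow]
    have hs : 0 < Real.sqrt N := Real.sqrt_pos.2 hN'
    field_simp
    rw [Real.sq_sqrt hN'.le]
  have h3 : Tendsto (fun N : ℕ => (∑ n ∈ Finset.Icc 1 N, residueClass a n) / N -
      (∑ n ∈ Finset.range (N + 1), thetaClass a n) / N) atTop (nhds 0) := by
    have hsum : ∀ N : ℕ, ∑ n ∈ Finset.range (N + 1), thetaClass a n =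
        ∑ n ∈ Finset.Ioc 0 N, thetaClass a n := by
      intro N
      rw [Finset.range_eq_Ico, Finset.sum_eq_sum_Ico_succ_bot (by omega)]
      rw [show thetaClass a 0 = 0 by simp [thetaClass], zero_add]
      rfl
    refine squeeze_zero' (Eventually.of_forall fun N => ?_) ?_ h2
    · rw [← sub_div, hsum]
      refine div_nonneg (sub_nonneg.2 (Finset.sum_le_sum fun n _ => ?_)) (Nat.cast_nonneg _)
      unfold thetaClass
      split_ifs with h
      · simp [residueClass, Set.indicator, h.2, vonMangoldt_apply_prime h.1]
      · exact residueClass_nonneg a n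
    · filter_upwards [eventually_ge_atTop 1] with N hN
      rw [← sub_div, hsum]
      have h4 := Chebyshev.psi_sub_theta_le (x := N) (by exact_mod_cast hN)
      rw [Chebyshev.psi_sub_theta_eq_sum_not_prime, Nat.floor_natCast] at h4
      refine div_le_div_of_nonneg_right (le_trans ?_ (h4.trans (by linarith))) (Nat.cast_nonneg _)
      rw [show Finset.Icc 1 N = Finset.Ioc 0 N from rfl, ← Finset.sum_sub_distrib,
        Finset.sum_filter]
      refine Finset.sum_le_sum fun n _ => ?_
      unfold thetaClass
      have := residueClass_le a n
      by_cases hp : n.Prime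
      · by_cases hc : (n : ZMod q) = a
        · simp [residueClass, Set.indicator, hp, hc, vonMangoldt_apply_prime hp]
        · simp [residueClass, Set.indicator, hp, hc]
      · simp only [hp, false_and, if_false, not_false_eq_true, if_true, sub_zero]
        exact this
  have h5 := h1.sub h3
  rw [sub_zero] at h5
  refine h5.congr fun N => ?_
  simp [Function.comp]

end PNT

end ArtinRatio


namespace ArtinRatio

section BT

lemma factorial_dvd_aux {l : ℕ} (hl : l.Prime) (K : ℕ) :
    K.factorial ∣ l ^ K * ∏ j ∈ Finset.range K, (l * (j + 1) + 1) := by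
  set e := padicValNat l K.factorial with he
  haveI : Fact l.Prime := ⟨hl⟩
  obtain ⟨M, hM⟩ : l ^ e ∣ K.factorial := pow_padicValNat_dvd
  have hcop : Nat.Coprime l M := by
    rw [Nat.Prime.coprime_iff_not_dvd hl]
    rintro ⟨t, rfl⟩
    have : l ^ (e + 1) ∣ K.factorial := ⟨t, by rw [hM]; ring⟩
    exact pow_succ_padicValNat_not_dvd (Nat.factorial_ne_zero K) this
  have heK : e ≤ K := by
    have h1 := sub_one_mul_padicValNat_factorial (p := l) K
    have h2 : e ≤ (l - 1) * e := Nat.le_mul_of_pos_left _ (by have := hl.two_le; omega)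
    rw [← he] at h1
    omega
  have hMdvd : M ∣ ∏ j ∈ Finset.range K, (l * (j + 1) + 1) := by
    have hM0 : M ≠ 0 := by
      rintro rfl
      exact Nat.factorial_ne_zero K (by simpa using hM)
    obtain ⟨m, hm⟩ : ∃ m, l * m ≡ 1 [MOD M] := by
      obtain ⟨m, -, hm⟩ := Nat.exists_mul_mod_eq_of_coprime 1 hcop hM0
      exact ⟨m, hm⟩
    have h1 : M ∣ ∏ j ∈ Finset.range K, (m + 1 + j) := by
      rw [← Nat.ascFactorial_eq_prod_range]
      exact (Dvd.intro_left _ hM.symm).trans (Nat.factorial_dvd_ascFactorial _ _)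
    have h2 : ∏ j ∈ Finset.range K, (l * (j + 1) + 1) ≡
        ∏ j ∈ Finset.range K, (l * (m + 1 + j)) [MOD M] := by
      apply Nat.ModEq.prod
      intro j _
      have : l * (m + 1 + j) = l * (j + 1) + l * m := by ring
      rw [this]
      exact Nat.ModEq.add_left _ hm.symm
    rw [(Nat.modEq_zero_iff_dvd).symm]
    refine h2.trans ?_
    rw [Nat.modEq_zero_iff_dvd, Finset.prod_mul_distrib]
    exact Dvd.dvd.mul_left h1 _
  rw [hM]
  exact Nat.mul_dvd_mul (pow_dvd_pow l heK) hMdvd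

lemma bt_prod {l : ℕ} (hl : l.Prime) (K : ℕ) (T : Finset ℕ)
    (hT : ∀ p ∈ T, p.Prime ∧ l ∣ p - 1 ∧ K < p ∧ p ≤ l * K + 1) :
    ∏ p ∈ T, p ≤ l ^ (2 * K) * (K + 1) := by
  have h1 : ∏ p ∈ T, p ∣ ∏ j ∈ Finset.range K, (l * (j + 1) + 1) := by
    apply Finset.prod_primes_dvd
    · intro p hp; exact (hT p hp).1.prime
    · intro p hp
      obtain ⟨hp1, ⟨j, hj⟩, hp3, hp4⟩ := hT p hp
      have hpp := hp1.two_le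
      have hpj : p = l * j + 1 := by omega
      have hj0 : j ≠ 0 := by rintro rfl; omega
      have hjK : j ≤ K := by
        have : l * j ≤ l * K := by omega
        exact Nat.le_of_mul_le_mul_left this hl.pos
      have : p = l * ((j - 1) + 1) + 1 := by rw [Nat.sub_add_cancel (by omega)]; exact hpj
      rw [this]
      exact Finset.dvd_prod_of_mem (fun j => l * (j + 1) + 1) (Finset.mem_range.2 (by omega))
  have h2 : Nat.Coprime (∏ p ∈ T, p) K.factorial := by
    apply Nat.Coprime.prod_left
    intro p hp
    exact (hT p hp).1.coprime_factorial_of_lt (hT p hp).2.2.1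
  have h3 := Nat.Coprime.mul_dvd_of_dvd_of_dvd h2 (h1.mul_left (l ^ K)) (factorial_dvd_aux hl K)
  have h4 := Nat.le_of_dvd (Nat.mul_pos (pow_pos hl.pos _)
    (Finset.prod_pos fun i _ => by omega)) h3
  have h5 : ∏ j ∈ Finset.range K, (l * (j + 1) + 1) ≤ l ^ K * ((K + 1) * K.factorial) := by
    rw [← Nat.factorial_succ]
    calc ∏ j ∈ Finset.range K, (l * (j + 1) + 1) ≤ ∏ j ∈ Finset.range K, (l * (j + 2)) := by
          apply Finset.prod_le_prod'
          intro j _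
          have := hl.two_le
          nlinarith
      _ = l ^ K * ∏ j ∈ Finset.range K, (j + 2) := by
          rw [Finset.prod_mul_distrib]; simp
      _ = _ := by
          congr 1
          rw [← Finset.prod_range_add_one_eq_factorial, Finset.prod_range_succ']
          simp [add_assoc]
  have h6 : (∏ p ∈ T, p) * K.factorial ≤ (l ^ (2 * K) * (K + 1)) * K.factorial := by
    calc _ ≤ l ^ K * (l ^ K * ((K + 1) * K.factorial)) := h4.trans (Nat.mul_le_mul_left _ h5)
      _ = _ := by ring
  exact Nat.le_of_mul_le_mul_right h6 (Nat.factorial_pos _)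

lemma pi_log_le (K : ℕ) (hK : 2 ≤ K) :
    ((Nat.primeCounting K : ℕ) : ℝ) * Real.log K ≤ 5 * K := by
  have hK' : (2:ℝ) ≤ K := by exact_mod_cast hK
  have h := Chebyshev.pi_le_log4_mul_div (x := K) (by linarith)
  rw [Nat.floor_natCast] at h
  have hlog : 0 < Real.log K := Real.log_pos (by linarith)
  have hs : 0 < Real.sqrt K := Real.sqrt_pos.2 (by linarith)
  have h2 : Real.log √(K:ℝ) = Real.log K / 2 := Real.log_sqrt (by linarith)
  have h3 : Real.log √(K:ℝ) ≤ √(K:ℝ) - 1 := Real.log_le_sub_one_of_pos hs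
  have h4 : Real.log 4 ≤ 1.4 := by
    have : Real.log 4 = 2 * Real.log 2 := by
      rw [show (4:ℝ) = 2 ^ 2 by norm_num, Real.log_pow]; norm_num
    rw [this]
    have := Real.log_two_lt_d9
    linarith
  have h5 : √(K:ℝ) * √(K:ℝ) = K := Real.mul_self_sqrt (by linarith)
  rw [h2] at h h3
  calc _ ≤ (Real.log 4 * K / (Real.log K / 2) + √(K:ℝ)) * Real.log K :=
        mul_le_mul_of_nonneg_right h hlog.le
    _ = 2 * Real.log 4 * K + √(K:ℝ) * Real.log K := by field_simp
    _ ≤ 2 * 1.4 * K + √(K:ℝ) * (2 * √(K:ℝ)) := by gcongr; linarith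
    _ ≤ 5 * K := by nlinarith

/-- A Brun-Titchmarsh type bound of Chebyshev strength. -/
lemma bt {l : ℕ} (hl : l.Prime) (N : ℕ) (hN : l * l ≤ N) :
    (((Finset.range (N + 1)).filter (fun p => p.Prime ∧ l ∣ p - 1)).card : ℝ) * Real.log N ≤
      60 * (N / l) * Real.log l := by
  set K := N / l with hKdef
  have hl2 := hl.two_le
  have hlK : l ≤ K := (Nat.le_div_iff_mul_le hl.pos).2 hN
  have hK2 : 2 ≤ K := hl2.trans hlK
  have hKN : l * K ≤ N := Nat.mul_div_le N l
  have hNK : N < l * (K + 1) := by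
    have := Nat.lt_mul_div_succ N hl.pos
    simpa using this
  have hKr : (2:ℝ) ≤ K := by exact_mod_cast hK2
  have hlr : (2:ℝ) ≤ l := by exact_mod_cast hl2
  have hlogK : 0 < Real.log K := Real.log_pos (by linarith)
  have hlogl : 1 / 2 ≤ Real.log l := by
    have h1 := Real.log_two_gt_d9
    have h2 : Real.log 2 ≤ Real.log l := Real.log_le_log (by norm_num) hlr
    linarith
  have hNpos : (0:ℝ) < N := by
    have : 0 < l * l := Nat.mul_pos hl.pos hl.pos
    exact_mod_cast (by omega : 0 < N)
  have hlogN : Real.log N ≤ 4 * Real.log K := by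
    have h1 : (N:ℝ) ≤ (K:ℝ) ^ 4 := by
      have a1 : N ≤ K ^ 4 := by
        have b1 : K + 1 ≤ K * K := by nlinarith
        calc N ≤ l * (K + 1) := hNK.le
          _ ≤ K * (K * K) := Nat.mul_le_mul hlK b1
          _ ≤ K * (K * K) * K := Nat.le_mul_of_pos_right _ (by omega)
          _ = K ^ 4 := by ring
      exact_mod_cast a1
    calc Real.log N ≤ Real.log ((K:ℝ) ^ 4) := Real.log_le_log hNpos h1
      _ = _ := by rw [Real.log_pow]; norm_num
  set T := (Finset.range (N + 1)).filter (fun p => (p.Prime ∧ l ∣ p - 1) ∧ K < p) with hT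
  have hTprod := bt_prod hl K T (by
    intro p hp
    rw [hT, Finset.mem_filter, Finset.mem_range] at hp
    obtain ⟨h1, ⟨h2, h3⟩, h4⟩ := hp
    refine ⟨h2, h3, h4, ?_⟩
    obtain ⟨j, hj⟩ := h3
    have hp2 := h2.two_le
    have : l * j < l * (K + 1) := by omega
    have hjK : j < K + 1 := Nat.lt_of_mul_lt_mul_left this
    have : l * j ≤ l * K := Nat.mul_le_mul_left _ (by omega)
    omega)
  have hTcard : (T.card : ℝ) * Real.log K ≤ 2 * K * Real.log l + K := by
    have h1 : (K:ℝ) ^ T.card ≤ (l:ℝ) ^ (2 * K) * (K + 1) := by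
      have : K ^ T.card ≤ ∏ p ∈ T, p := by
        rw [← Finset.prod_const]
        apply Finset.prod_le_prod'
        intro p hp
        rw [hT, Finset.mem_filter] at hp
        exact hp.2.2.le
      exact_mod_cast this.trans hTprod
    have h2 := Real.log_le_log (by positivity) h1
    rw [Real.log_pow, Real.log_mul (by positivity) (by positivity), Real.log_pow] at h2
    have h3 : Real.log ((K:ℝ) + 1) ≤ K := by
      have := Real.log_le_sub_one_of_pos (show (0:ℝ) < K + 1 by linarith)
      linarith
    push_cast at h2
    linarith
  have hcard : ((Finset.range (N + 1)).filter (fun p => p.Prime ∧ l ∣ p - 1)).card ≤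
      T.card + Nat.primeCounting K := by
    have h1 : (Finset.range (N + 1)).filter (fun p => p.Prime ∧ l ∣ p - 1) ⊆
        T ∪ (Finset.range (K + 1)).filter Nat.Prime := by
      intro p hp
      rw [Finset.mem_filter, Finset.mem_range] at hp
      rw [hT, Finset.mem_union, Finset.mem_filter, Finset.mem_filter, Finset.mem_range,
        Finset.mem_range]
      by_cases h : K < p
      · exact Or.inl ⟨hp.1, hp.2, h⟩
      · exact Or.inr ⟨by omega, hp.2.1⟩
    refine (Finset.card_le_card h1).trans ((Finset.card_union_le _ _).trans ?_)
    rw [Nat.primeCounting, Nat.primeCounting', Nat.count_eq_card_filter_range]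
  have hcard' : (((Finset.range (N + 1)).filter (fun p => p.Prime ∧ l ∣ p - 1)).card : ℝ) ≤
      T.card + Nat.primeCounting K := by exact_mod_cast hcard
  have hpi := pi_log_le K hK2
  have hKdiv : (K:ℝ) ≤ N / l := Nat.cast_div_le
  calc _ ≤ ((T.card : ℝ) + Nat.primeCounting K) * (4 * Real.log K) := by gcongr
    _ = 4 * (T.card * Real.log K) + 4 * (Nat.primeCounting K * Real.log K) := by ring
    _ ≤ 4 * (2 * K * Real.log l + K) + 4 * (5 * K) := by gcongr
    _ ≤ 60 * K * Real.log l := by nlinarith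
    _ ≤ 60 * (N / l) * Real.log l := by gcongr

end BT

end ArtinRatio


namespace ArtinRatio

section Weights

/-- weighted sum over primes up to `N` -/
noncomputable def PS (a : ℕ → ℝ) (k N : ℕ) : ℝ :=
  ∑ p ∈ (Finset.range (N + 1)).filter Nat.Prime, a p * ((p : ℝ) ^ k * ((p : ℝ) - 1))

/-- logarithmic density of a function on primes -/
def Dens (a : ℕ → ℝ) (c : ℝ) : Prop :=
  Tendsto (fun N : ℕ => (∑ p ∈ (Finset.range (N + 1)).filter Nat.Prime, a p * Real.log p) / N)
    atTop (nhds c)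

noncomputable def fw (k n : ℕ) : ℝ := (n : ℝ) ^ k * ((n : ℝ) - 1) / Real.log n

noncomputable def Gw (k N : ℕ) : ℝ := (N : ℝ) ^ (k + 2) / Real.log N

lemma Dens.add {a b : ℕ → ℝ} {c e : ℝ} (h1 : Dens a c) (h2 : Dens b e) :
    Dens (fun n => a n + b n) (c + e) := by
  unfold Dens at *
  convert h1.add h2 using 2 with N
  rw [← add_div, ← Finset.sum_add_distrib]
  simp only [add_mul]

lemma Dens.const_mul {a : ℕ → ℝ} {c : ℝ} (h1 : Dens a c) (r : ℝ) :
    Dens (fun n => r * a n) (r * c) := by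
  unfold Dens at *
  convert h1.const_mul r using 2 with N
  rw [← mul_div_assoc, Finset.mul_sum]
  simp only [mul_assoc]

lemma Dens.sum {ι : Type*} (s : Finset ι) {a : ι → ℕ → ℝ} {c : ι → ℝ}
    (h : ∀ i ∈ s, Dens (a i) (c i)) :
    Dens (fun n => ∑ i ∈ s, a i n) (∑ i ∈ s, c i) := by
  classical
  induction s using Finset.induction_on with
  | empty => simp [Dens]
  | insert i s hi ih =>
    simp only [Finset.sum_insert hi]
    exact (h i (Finset.mem_insert_self _ _)).add
      (ih (fun j hj => h j (Finset.mem_insert_of_mem hj)))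

lemma Dens.congr_large {a b : ℕ → ℝ} {c : ℝ} (M : ℕ) (h1 : Dens a c)
    (h : ∀ p, p.Prime → M ≤ p → a p = b p) : Dens b c := by
  have h0 : Dens (fun n => b n - a n) 0 := by
    unfold Dens
    have hb : ∀ N, M ≤ N → (∑ p ∈ (Finset.range (N + 1)).filter Nat.Prime,
        (b p - a p) * Real.log p) = ∑ p ∈ (Finset.range M).filter Nat.Prime,
        (b p - a p) * Real.log p := by
      intro N hN
      symm
      apply Finset.sum_subset
      · apply Finset.filter_subset_filter
        intro x hx
        rw [Finset.mem_range] at *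
        omega
      · intro p hp hp'
        rw [Finset.mem_filter, Finset.mem_range] at *
        rw [h p hp.2 (by by_contra hlt; exact hp' ⟨by omega, hp.2⟩)]
        simp
    refine (tendsto_const_div_atTop_nhds_zero_nat (∑ p ∈ (Finset.range M).filter Nat.Prime,
        (b p - a p) * Real.log p)).congr' ?_
    filter_upwards [eventually_ge_atTop M] with N hN
    rw [hb N hN]
  have := h1.add h0
  simpa using this

lemma dens_class {q : ℕ} [NeZero q] {a : ZMod q} (ha : IsUnit a) [DecidableEq (ZMod q)] :
    Dens (fun n => if (n : ZMod q) = a then 1 else 0) (q.totient : ℝ)⁻¹ := by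
  unfold Dens
  convert theta_ap ha using 3 with N
  rw [Finset.sum_filter]
  apply Finset.sum_congr rfl
  intro n _
  unfold thetaClass
  by_cases h1 : n.Prime <;> by_cases h2 : (n : ZMod q) = a <;> simp [h1, h2]

lemma dens_one : Dens (fun _ => 1) 1 := by
  have h := dens_class (q := 1) (a := 1) isUnit_one
  simpa [Subsingleton.elim _ (1 : ZMod 1)] using h

lemma fw_mono (k : ℕ) : Monotone (fw k) := by
  apply monotone_nat_of_le_succ
  intro n
  unfold fw
  rcases n with _ | n
  · simp
  rcases n with _ | n
  · simp
    have := Real.log_nonneg (show (1:ℝ) ≤ 1 + 1 by norm_num)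
    have h2 : (0:ℝ) ≤ 1 + 1 - 1 := by norm_num
    positivity
  set x : ℝ := ((n + 1 + 1 : ℕ) : ℝ) with hx
  have hx2 : 2 ≤ x := by rw [hx]; push_cast; linarith [(n.cast_nonneg : (0:ℝ) ≤ n)]
  have hx1 : ((n + 1 + 1 + 1 : ℕ) : ℝ) = x + 1 := by rw [hx]; push_cast; ring
  rw [hx1]
  have hl : 0 < Real.log x := Real.log_pos (by linarith)
  have hl1 : 0 < Real.log (x + 1) := Real.log_pos (by linarith)
  have h1 : Real.log (x + 1) ≤ Real.log x + 1 / x := by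
    have e : x + 1 = x * (1 + 1 / x) := by field_simp
    rw [e, Real.log_mul (by positivity) (by positivity)]
    have := Real.log_le_sub_one_of_pos (show 0 < 1 + 1 / x by positivity)
    linarith
  have h2 : 1 - x⁻¹ ≤ Real.log x := Real.one_sub_inv_le_log_of_pos (by linarith)
  have h3 : (x - 1) * Real.log (x + 1) ≤ x * Real.log x := by
    calc (x - 1) * Real.log (x + 1) ≤ (x - 1) * (Real.log x + 1 / x) := by
          apply mul_le_mul_of_nonneg_left h1; linarith
      _ = (x - 1) * Real.log x + (1 - x⁻¹) := by field_simp
      _ ≤ _ := by linarith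
  rw [mul_div_assoc, mul_div_assoc]
  have h4 : (x - 1) / Real.log x ≤ (x + 1 - 1) / Real.log (x + 1) := by
    rw [div_le_div_iff₀ hl hl1]
    linarith
  have h5 : 0 ≤ (x - 1) / Real.log x := div_nonneg (by linarith) hl.le
  apply mul_le_mul _ h4 h5 (by positivity)
  apply pow_le_pow_left₀ (by linarith); linarith

lemma fw_zero (k : ℕ) : fw k 0 = 0 := by simp [fw]

lemma fw_nonneg (k n : ℕ) : 0 ≤ fw k n := by
  rw [← fw_zero k]; exact fw_mono k (Nat.zero_le n)

lemma abel_bound (e f : ℕ → ℝ) (hf : Monotone f) (hf0 : f 0 = 0) (C ε : ℝ) (hC : 0 ≤ C)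
    (hε : 0 ≤ ε) (hE : ∀ N : ℕ, |∑ n ∈ Finset.range (N + 1), e n| ≤ C + ε * N) (N : ℕ) :
    |∑ n ∈ Finset.range (N + 1), e n * f n| ≤ 2 * ((C + ε * N) * f N) := by
  have key : ∀ N : ℕ, |∑ n ∈ Finset.range (N + 1), e n * f n -
      (∑ n ∈ Finset.range (N + 1), e n) * f N| ≤ (C + ε * N) * f N := by
    intro N
    induction N with
    | zero => simp [hf0]
    | succ N ih =>
      rw [Finset.sum_range_succ, Finset.sum_range_succ e (N + 1)]
      have h1 : f N ≤ f (N + 1) := hf (Nat.le_succ N)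
      have h0 : 0 ≤ f N := by rw [← hf0]; exact hf (Nat.zero_le N)
      have h2 := hE N
      set S := ∑ n ∈ Finset.range (N + 1), e n * f n
      set E := ∑ n ∈ Finset.range (N + 1), e n
      have h3 : S + e (N + 1) * f (N + 1) - (E + e (N + 1)) * f (N + 1) =
        (S - E * f N) - E * (f (N + 1) - f N) := by ring
      rw [h3]
      have h4 : |E * (f (N + 1) - f N)| ≤ (C + ε * N) * (f (N + 1) - f N) := by
        rw [abs_mul, abs_of_nonneg (sub_nonneg.2 h1)]
        exact mul_le_mul_of_nonneg_right h2 (sub_nonneg.2 h1)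
      have h5 := abs_sub (S - E * f N) (E * (f (N + 1) - f N))
      push_cast
      have h6 : 0 ≤ ε * f (N + 1) := mul_nonneg hε (h0.trans h1)
      nlinarith
  have h0 : 0 ≤ f N := by rw [← hf0]; exact hf (Nat.zero_le N)
  have h1 := key N
  have h2 : |(∑ n ∈ Finset.range (N + 1), e n) * f N| ≤ (C + ε * N) * f N := by
    rw [abs_mul, abs_of_nonneg h0]
    exact mul_le_mul_of_nonneg_right (hE N) h0
  have h3 := abs_add_le (∑ n ∈ Finset.range (N + 1), e n * f n -
      (∑ n ∈ Finset.range (N + 1), e n) * f N) ((∑ n ∈ Finset.range (N + 1), e n) * f N)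
  rw [sub_add_cancel] at h3
  linarith

lemma fw_le (k N : ℕ) (hN : 2 ≤ N) : N * fw k N ≤ Gw k N := by
  unfold fw Gw
  have hN' : (2:ℝ) ≤ N := by exact_mod_cast hN
  have hl : 0 < Real.log N := Real.log_pos (by linarith)
  rw [← mul_div_assoc, div_le_div_iff_of_pos_right hl]
  have : (N:ℝ) ^ (k + 2) = N * (N ^ k * N) := by ring
  rw [this]
  gcongr
  linarith

lemma Gw_pos (k N : ℕ) (hN : 2 ≤ N) : 0 < Gw k N := by
  unfold Gw
  have hN' : (2:ℝ) ≤ N := by exact_mod_cast hN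
  have hl : 0 < Real.log N := Real.log_pos (by linarith)
  positivity

lemma abel_G (k : ℕ) (e : ℕ → ℝ)
    (hE : Tendsto (fun N : ℕ => (∑ n ∈ Finset.range (N + 1), e n) / N) atTop (nhds 0)) :
    Tendsto (fun N : ℕ => (∑ n ∈ Finset.range (N + 1), e n * fw k n) / Gw k N)
      atTop (nhds 0) := by
  rw [Metric.tendsto_atTop] at hE ⊢
  intro ε hε
  obtain ⟨M, hM⟩ := hE (ε / 8) (by linarith)
  set C := ∑ N ∈ Finset.range (M + 1), |∑ n ∈ Finset.range (N + 1), e n| with hC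
  have hC0 : 0 ≤ C := Finset.sum_nonneg (fun _ _ => abs_nonneg _)
  have hb : ∀ N : ℕ, |∑ n ∈ Finset.range (N + 1), e n| ≤ C + ε / 8 * N := by
    intro N
    by_cases h : N ≤ M
    · have : |∑ n ∈ Finset.range (N + 1), e n| ≤ C :=
        Finset.single_le_sum (f := fun N => |∑ n ∈ Finset.range (N + 1), e n|)
          (fun _ _ => abs_nonneg _) (Finset.mem_range.2 (by omega))
      have h2 : 0 ≤ ε / 8 * N := by positivity
      linarith
    · have h1 := hM N (by omega)
      have hNpos : (0:ℝ) < N := by exact_mod_cast (by omega : 0 < N)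
      rw [Real.dist_eq, sub_zero, abs_div, abs_of_pos hNpos, div_lt_iff₀ hNpos] at h1
      linarith
  obtain ⟨K, hK⟩ := exists_nat_gt (C / (ε / 8))
  refine ⟨K + 2, fun N hN => ?_⟩
  have hN2 : 2 ≤ N := by omega
  have h1 := abel_bound e (fw k) (fw_mono k) (fw_zero k) C (ε / 8) hC0 (by linarith) hb N
  have hG := Gw_pos k N hN2
  rw [Real.dist_eq, sub_zero, abs_div, abs_of_pos hG, div_lt_iff₀ hG]
  have h2 : C ≤ ε / 8 * N := by
    rw [div_lt_iff₀ (by linarith)] at hK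
    have : (K:ℝ) ≤ N := by exact_mod_cast (by omega : K ≤ N)
    nlinarith
  have h3 := fw_le k N hN2
  have h4 := fw_nonneg k N
  have h5 : (C + ε / 8 * N) * fw k N ≤ (ε / 4 * N) * fw k N := by
    apply mul_le_mul_of_nonneg_right _ h4; linarith
  nlinarith

lemma PS_eq (a : ℕ → ℝ) (k N : ℕ) : PS a k N =
    ∑ n ∈ Finset.range (N + 1), (if n.Prime then a n * Real.log n else 0) * fw k n := by
  unfold PS
  rw [Finset.sum_filter]
  apply Finset.sum_congr rfl
  intro n _
  split_ifs with h
  · have : Real.log n ≠ 0 := (Real.log_pos (by exact_mod_cast h.one_lt)).ne'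
    unfold fw
    field_simp
  · simp

lemma PS_div_G {a : ℕ → ℝ} (h : Dens a 0) (k : ℕ) :
    Tendsto (fun N => PS a k N / Gw k N) atTop (nhds 0) := by
  simp only [PS_eq]
  apply abel_G
  unfold Dens at h
  simpa only [Finset.sum_filter] using h

lemma sum_fw_lower (k N : ℕ) (hN : 8 ≤ N) :
    (1 / 2) ^ (k + 4) * Gw k N ≤ ∑ n ∈ Finset.range (N + 1), fw k n := by
  have hNr : (8:ℝ) ≤ N := by exact_mod_cast hN
  have hl : 0 < Real.log N := Real.log_pos (by linarith)
  have hM1 : (N:ℝ) / 2 ≤ ((N - N / 2 : ℕ) : ℝ) := by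
    have : N ≤ 2 * (N - N / 2) := by omega
    have : (N:ℝ) ≤ 2 * ((N - N / 2 : ℕ) : ℝ) := by exact_mod_cast this
    linarith
  have h1 : ∑ n ∈ Finset.Ico (N / 2 + 1) (N + 1), fw k n ≤
      ∑ n ∈ Finset.range (N + 1), fw k n := by
    apply Finset.sum_le_sum_of_subset_of_nonneg
    · intro x hx
      rw [Finset.mem_Ico] at hx
      exact Finset.mem_range.2 hx.2
    · intro n _ _; exact fw_nonneg k n
  refine le_trans ?_ h1
  have h2 : ∀ n ∈ Finset.Ico (N / 2 + 1) (N + 1),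
      ((N:ℝ) / 2) ^ k * ((N:ℝ) / 4) / Real.log N ≤ fw k n := by
    intro n hn
    rw [Finset.mem_Ico] at hn
    have a1 : (N:ℝ) / 2 ≤ n := by
      have : (N:ℝ) ≤ 2 * n := by exact_mod_cast (by omega : N ≤ 2 * n)
      linarith
    have a2 : (n:ℝ) ≤ N := by exact_mod_cast (by omega : n ≤ N)
    have a3 : 0 < Real.log n := Real.log_pos (by linarith)
    unfold fw
    apply div_le_div₀
    · apply mul_nonneg (by positivity); linarith
    · gcongr
      linarith
    · exact a3
    · exact Real.log_le_log (by linarith) a2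
  have h3 := Finset.card_nsmul_le_sum _ _ _ h2
  rw [Nat.card_Ico, nsmul_eq_mul] at h3
  have e : N + 1 - (N / 2 + 1) = N - N / 2 := by omega
  rw [e] at h3
  refine le_trans ?_ h3
  calc (1 / 2) ^ (k + 4) * Gw k N ≤ (1 / 2) ^ (k + 3) * Gw k N := by
        apply mul_le_mul_of_nonneg_right _ (Gw_pos k N (by omega)).le
        apply pow_le_pow_of_le_one <;> norm_num
    _ = ((N:ℝ) / 2) * (((N:ℝ) / 2) ^ k * ((N:ℝ) / 4) / Real.log N) := by
        unfold Gw
        rw [div_pow, pow_add, pow_add, div_pow, one_pow]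
        field_simp
        norm_num
        ring
    _ ≤ _ := by gcongr

lemma W_lower (k : ℕ) : ∃ c > 0, ∀ᶠ N in atTop, c * Gw k N ≤ PS (fun _ => 1) k N := by
  refine ⟨(1 / 2) ^ (k + 5), by positivity, ?_⟩
  have h1 : Tendsto (fun N : ℕ => (∑ n ∈ Finset.range (N + 1),
      ((if n.Prime then (1:ℝ) * Real.log n else 0) - 1)) / N) atTop (nhds 0) := by
    have h2 := dens_one
    unfold Dens at h2
    simp only [Finset.sum_filter] at h2
    have h3 : Tendsto (fun N : ℕ => 1 + 1 / (N:ℝ)) atTop (nhds (1 + 0)) :=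
      tendsto_const_nhds.add tendsto_one_div_atTop_nhds_zero_nat
    have h4 := h2.sub h3
    rw [add_zero, sub_self] at h4
    refine h4.congr' ?_
    filter_upwards [eventually_ge_atTop 1] with N hN
    have : (N:ℝ) ≠ 0 := by exact_mod_cast (by omega : N ≠ 0)
    rw [Finset.sum_sub_distrib]
    simp only [Finset.sum_const, Finset.card_range, nsmul_eq_mul, mul_one]
    push_cast
    field_simp
  have h2 := abel_G k _ h1
  have h3 := h2.eventually (lt_mem_nhds (show -(1 / 2 : ℝ) ^ (k + 5) < 0 by
    have : (0:ℝ) < (1 / 2) ^ (k + 5) := by positivity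
    linarith))
  filter_upwards [h3, eventually_ge_atTop 8] with N hN hN8
  have hG := Gw_pos k N (by omega)
  rw [lt_div_iff₀ hG] at hN
  have h4 := sum_fw_lower k N hN8
  rw [PS_eq]
  simp only [sub_mul, one_mul, Finset.sum_sub_distrib] at hN
  simp only [one_mul]
  have : (1 / 2 : ℝ) ^ (k + 4) = 2 * (1 / 2) ^ (k + 5) := by ring
  rw [this] at h4
  linarith

lemma PS_add (a b : ℕ → ℝ) (k N : ℕ) : PS (fun n => a n + b n) k N = PS a k N + PS b k N := by
  unfold PS
  rw [← Finset.sum_add_distrib]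
  simp only [add_mul]

lemma PS_const_mul (r : ℝ) (a : ℕ → ℝ) (k N : ℕ) :
    PS (fun n => r * a n) k N = r * PS a k N := by
  unfold PS
  rw [Finset.mul_sum]
  simp only [mul_assoc]

lemma dens_ratio {a : ℕ → ℝ} {c : ℝ} (h : Dens a c) (k : ℕ) :
    Tendsto (fun N => PS a k N / PS (fun _ => 1) k N) atTop (nhds c) := by
  have h0 : Dens (fun n => a n + (-c) * 1) 0 := by
    have := h.add (dens_one.const_mul (-c))
    simpa using this
  have h1 := PS_div_G h0 k
  obtain ⟨b, hb, hW⟩ := W_lower k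
  have h2 : Tendsto (fun N => PS a k N / PS (fun _ => 1) k N - c) atTop (nhds 0) := by
    have h1' := h1.abs.const_mul (b⁻¹)
    rw [abs_zero, mul_zero] at h1'
    refine squeeze_zero_norm' ?_ h1'
    filter_upwards [hW, eventually_ge_atTop 2] with N hN hN2
    have hG := Gw_pos k N hN2
    have hWp : 0 < PS (fun _ => 1) k N := lt_of_lt_of_le (mul_pos hb hG) hN
    rw [PS_add, PS_const_mul (-c) (fun _ => 1)]
    have e : PS a k N / PS (fun _ => 1) k N - c =
      (PS a k N + -c * PS (fun _ => 1) k N) / PS (fun _ => 1) k N := by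
      field_simp; ring
    rw [e, Real.norm_eq_abs, abs_div, abs_div, abs_of_pos hWp, abs_of_pos hG]
    rw [inv_mul_eq_div, div_div, mul_comm _ b]
    gcongr
  simpa using h2.add_const c

end Weights

end ArtinRatio


namespace ArtinRatio

section Tail

noncomputable def TY (Y p : ℕ) : ℝ := ∑ l ∈ (p - 1).primeFactors.filter (fun l => Y < l), 1 / (l : ℝ)

lemma bt_all {l : ℕ} (hl : l.Prime) (N : ℕ) (hN : 2 ≤ N) :
    (((Finset.range (N + 1)).filter (fun p => p.Prime ∧ l ∣ p - 1)).card : ℝ) * Real.log N ≤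
      60 * (N / l) * Real.log l := by
  by_cases h : l * l ≤ N
  · exact bt hl N h
  have hNr : (2:ℝ) ≤ N := by exact_mod_cast hN
  have hlr : (2:ℝ) ≤ l := by exact_mod_cast hl.two_le
  have hlogl : 0 < Real.log l := Real.log_pos (by linarith)
  have hlogN : 0 < Real.log N := Real.log_pos (by linarith)
  have h1 : ((Finset.range (N + 1)).filter (fun p => p.Prime ∧ l ∣ p - 1)).card ≤ N / l := by
    rw [← Nat.Ioc_filter_dvd_card_eq_div]
    apply Finset.card_le_card_of_injOn (fun p => p - 1)
    · intro p hp
      simp only [Finset.coe_filter, Finset.mem_range, Set.mem_ofPred_eq] at hp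
      simp only [Finset.coe_filter, Finset.mem_Ioc, Set.mem_ofPred_eq]
      have := hp.2.1.two_le
      exact ⟨by omega, hp.2.2⟩
    · intro p hp q hq hpq
      simp only [Finset.coe_filter, Finset.mem_range, Set.mem_ofPred_eq] at hp hq
      have := hp.2.1.two_le
      have := hq.2.1.two_le
      simp only at hpq
      omega
  have h2 : (((Finset.range (N + 1)).filter (fun p => p.Prime ∧ l ∣ p - 1)).card : ℝ) ≤ N / l :=
    le_trans (by exact_mod_cast h1) Nat.cast_div_le
  have h3 : Real.log N ≤ 2 * Real.log l := by
    have : (N:ℝ) ≤ l * l := by exact_mod_cast (by omega : N ≤ l * l)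
    have := Real.log_le_log (by linarith) this
    rw [Real.log_mul (by positivity) (by positivity)] at this
    linarith
  calc _ ≤ (N / l : ℝ) * (2 * Real.log l) := by gcongr
    _ ≤ 60 * (N / l) * Real.log l := by
      have : 0 ≤ (N / l : ℝ) * Real.log l := by positivity
      linarith

lemma summable_log_div_sq : Summable (fun n : ℕ => Real.log n / (n:ℝ) ^ 2) := by
  have h1 : Summable (fun n : ℕ => 2 * (1 / (n:ℝ) ^ (3 / 2 : ℝ))) :=
    (Real.summable_one_div_nat_rpow.2 (by norm_num)).mul_left 2
  refine Summable.of_nonneg_of_le (fun n => ?_) (fun n => ?_) h1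
  · exact div_nonneg (Real.log_natCast_nonneg n) (by positivity)
  · rcases Nat.eq_zero_or_pos n with rfl | hn
    · simp
    have hn' : (0:ℝ) < n := by exact_mod_cast hn
    have h2 := Real.log_le_rpow_div hn'.le (show (0:ℝ) < 1 / 2 by norm_num)
    have h3 : (n:ℝ) ^ 2 = (n:ℝ) ^ (1 / 2 : ℝ) * (n:ℝ) ^ (3 / 2 : ℝ) := by
      rw [← Real.rpow_add hn', ← Real.rpow_natCast]; norm_num
    rw [h3]
    have h4 : 0 < (n:ℝ) ^ (1 / 2 : ℝ) := by positivity
    have h5 : 0 < (n:ℝ) ^ (3 / 2 : ℝ) := by positivity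
    calc _ ≤ ((n:ℝ) ^ (1 / 2 : ℝ) / (1 / 2)) / ((n:ℝ) ^ (1 / 2 : ℝ) * (n:ℝ) ^ (3 / 2 : ℝ)) := by
          gcongr
      _ = _ := by field_simp

lemma TY_nonneg (Y p : ℕ) : 0 ≤ TY Y p := Finset.sum_nonneg (fun _ _ => by positivity)

lemma sum_TY (Y N : ℕ) (hN : 2 ≤ N) :
    (∑ p ∈ (Finset.range (N + 1)).filter Nat.Prime, TY Y p) * Real.log N ≤
      60 * N * ∑ l ∈ (Finset.range (N + 1)).filter (fun l => Y < l), Real.log l / (l:ℝ) ^ 2 := by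
  have hNr : (2:ℝ) ≤ N := by exact_mod_cast hN
  have hlogN : 0 < Real.log N := Real.log_pos (by linarith)
  have h1 : ∑ p ∈ (Finset.range (N + 1)).filter Nat.Prime, TY Y p =
      ∑ l ∈ (Finset.range (N + 1)).filter (fun l => Y < l ∧ l.Prime),
        (((Finset.range (N + 1)).filter (fun p => p.Prime ∧ l ∣ p - 1)).card : ℝ) * (1 / l) := by
    unfold TY
    simp only [← nsmul_eq_mul, ← Finset.sum_const]
    apply Finset.sum_comm'
    intro p l
    simp only [Finset.mem_filter, Finset.mem_range, Nat.mem_primeFactors]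
    constructor
    · rintro ⟨⟨a, b⟩, ⟨c, e, f⟩, g⟩
      have := Nat.le_of_dvd (by omega) e
      exact ⟨⟨a, b, e⟩, by omega, g, c⟩
    · rintro ⟨⟨a, b, e⟩, a2, g, c⟩
      have := b.two_le
      exact ⟨⟨a, b⟩, ⟨c, e, by omega⟩, g⟩
  rw [h1, Finset.sum_mul, Finset.mul_sum]
  have h2 : ∀ l ∈ (Finset.range (N + 1)).filter (fun l => Y < l ∧ l.Prime),
      (((Finset.range (N + 1)).filter (fun p => p.Prime ∧ l ∣ p - 1)).card : ℝ) * (1 / l)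
        * Real.log N ≤ 60 * N * (Real.log l / (l:ℝ) ^ 2) := by
    intro l hl
    rw [Finset.mem_filter] at hl
    have hlp := hl.2.2
    have hl0 : (0:ℝ) < l := by exact_mod_cast hlp.pos
    have := bt_all hlp N hN
    calc _ = (((Finset.range (N + 1)).filter (fun p => p.Prime ∧ l ∣ p - 1)).card : ℝ) *
          Real.log N * (1 / l) := by ring
      _ ≤ 60 * (N / l) * Real.log l * (1 / l) := by gcongr
      _ = _ := by field_simp
  refine (Finset.sum_le_sum h2).trans ?_
  apply Finset.sum_le_sum_of_subset_of_nonneg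
  · intro l hl
    rw [Finset.mem_filter] at *
    exact ⟨hl.1, hl.2.1⟩
  · intro l _ _
    have := Real.log_natCast_nonneg l
    positivity

lemma tail_bound (k : ℕ) (ε : ℝ) (hε : 0 < ε) : ∃ Y0 : ℕ, ∀ Y, Y0 ≤ Y →
    ∀ᶠ N in atTop, PS (TY Y) k N ≤ ε * PS (fun _ => 1) k N := by
  obtain ⟨c, hc, hW⟩ := W_lower k
  obtain ⟨s, hs⟩ := summable_iff_vanishing_norm.1 summable_log_div_sq (ε * c / 60) (by positivity)
  refine ⟨s.sup id, fun Y hY => ?_⟩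
  filter_upwards [hW, eventually_ge_atTop 2] with N hN hN2
  have hNr : (2:ℝ) ≤ N := by exact_mod_cast hN2
  have hlogN : 0 < Real.log N := Real.log_pos (by linarith)
  have h1 := hs ((Finset.range (N + 1)).filter (fun l => Y < l)) (by
    rw [Finset.disjoint_left]
    intro l hl hls
    rw [Finset.mem_filter] at hl
    have : l ≤ s.sup id := Finset.le_sup (f := id) hls
    omega)
  have h2 := le_of_lt (lt_of_le_of_lt (Real.le_norm_self _) h1)
  have h3 := sum_TY Y N hN2
  have h4 : PS (TY Y) k N ≤ (N:ℝ) ^ (k + 1) *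
      ∑ p ∈ (Finset.range (N + 1)).filter Nat.Prime, TY Y p := by
    unfold PS
    rw [Finset.mul_sum]
    apply Finset.sum_le_sum
    intro p hp
    rw [Finset.mem_filter, Finset.mem_range] at hp
    rw [mul_comm]
    apply mul_le_mul_of_nonneg_right _ (TY_nonneg _ _)
    rw [pow_succ]
    have a1 : (p:ℝ) ≤ N := by exact_mod_cast (by omega : p ≤ N)
    have a2 : (1:ℝ) ≤ p := by exact_mod_cast hp.2.one_lt.le
    apply mul_le_mul _ (by linarith) (by linarith) (by positivity)
    gcongr
  have h5 : (N:ℝ) ^ (k + 1) * ∑ p ∈ (Finset.range (N + 1)).filter Nat.Prime, TY Y p ≤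
      ε * (c * Gw k N) := by
    unfold Gw
    rw [← mul_div_assoc, ← mul_div_assoc, le_div_iff₀ hlogN, mul_assoc]
    calc _ ≤ (N:ℝ) ^ (k + 1) * (60 * N * (ε * c / 60)) := 
          mul_le_mul_of_nonneg_left (h3.trans (by gcongr)) (by positivity)
      _ = _ := by ring
  exact h4.trans (h5.trans (by gcongr))

end Tail

end ArtinRatio


namespace ArtinRatio

section Jac

lemma J_one (D : ℤ) (hD : D % 4 = 1) (p : ℕ) (hp : Odd p) (hdvd : D ∣ (p : ℤ) - 1) :
    jacobiSym D p = 1 := by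
  have hpm : ∀ m : ℕ, (m : ℤ) ∣ (p : ℤ) - 1 → jacobiSym p m = 1 := by
    intro m hm
    rw [jacobiSym.mod_left' (b := m) (a₂ := 1) ((Int.modEq_iff_dvd.2 hm).symm)]
    exact jacobiSym.one_left m
  rcases Int.natAbs_eq D with h | h
  · set m := D.natAbs
    rw [h] at hD hdvd ⊢
    rw [jacobiSym.quadratic_reciprocity_one_mod_four (by omega) hp]
    exact hpm m hdvd
  · set m := D.natAbs
    rw [h] at hD hdvd ⊢
    have hm : m % 4 = 3 := by omega
    rw [jacobiSym.neg _ hp]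
    have hd : (m : ℤ) ∣ (p : ℤ) - 1 := by simpa using hdvd
    have hmo : Odd m := Nat.odd_iff.2 (by omega)
    have hp2 := Nat.odd_iff.1 hp
    rcases (by omega : p % 4 = 1 ∨ p % 4 = 3) with h1 | h1
    · rw [ZMod.χ₄_nat_one_mod_four h1, jacobiSym.quadratic_reciprocity_one_mod_four' hmo h1,
        hpm m hd]
      rfl
    · rw [ZMod.χ₄_nat_three_mod_four h1, jacobiSym.quadratic_reciprocity_three_mod_four hm h1,
        hpm m hd]
      rfl

lemma J_one' (D : ℤ) (p : ℕ) (hp : Odd p) (h : p ≡ 1 [MOD 4 * D.natAbs]) :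
    jacobiSym D p = 1 := by
  rw [jacobiSym.mod_right D hp, h, ← jacobiSym.mod_right D odd_one, jacobiSym.one_right]

lemma exists_a0 (D : ℤ) (hD : Squarefree D) (n : ℕ) (hn : Squarefree n)
    (hd : ¬ ((if D % 4 = 1 then D else 4 * D) ∣ (n : ℤ))) :
    ∃ a : ℕ, Odd a ∧ a ≡ 1 [MOD n] ∧ jacobiSym D a = -1 := by
  by_cases hq : ∃ q : ℕ, q.Prime ∧ q ≠ 2 ∧ (q : ℤ) ∣ D ∧ ¬ q ∣ n
  · obtain ⟨q, hqp, hq2, ⟨r, hr⟩, hqn⟩ := hq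
    have hF : Fact q.Prime := ⟨hqp⟩
    obtain ⟨b, hb⟩ := quadraticChar_exists_neg_one (F := ZMod q) (by
      rw [ZMod.ringChar_zmod_n]; exact hq2)
    have hqr : ¬ q ∣ r.natAbs := by
      intro h
      rw [← Int.natCast_dvd] at h
      have : (q : ℤ) * q ∣ D := by rw [hr]; exact mul_dvd_mul_left _ h
      have := hD _ this
      rw [Int.isUnit_iff] at this
      have := hqp.two_le
      omega
    have hco : Nat.Coprime (4 * r.natAbs * n) q := by
      rw [Nat.coprime_comm, Nat.Prime.coprime_iff_not_dvd hqp, hqp.dvd_mul, hqp.dvd_mul]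
      rintro ((h | h) | h)
      · have : q ∣ 2 := hqp.dvd_of_dvd_pow (show q ∣ 2 ^ 2 by simpa using h)
        exact hq2 ((Nat.prime_dvd_prime_iff_eq hqp Nat.prime_two).1 this)
      · exact hqr h
      · exact hqn h
    obtain ⟨a, ha1, ha2⟩ := Nat.chineseRemainder hco 1 b.val
    have ha4 : a % 4 = 1 := by
      have : a ≡ 1 [MOD 4] := ha1.of_dvd ⟨r.natAbs * n, by ring⟩
      exact this
    have hao : Odd a := Nat.odd_iff.2 (by omega)
    refine ⟨a, hao, ha1.of_dvd (Dvd.intro_left _ rfl), ?_⟩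
    rw [hr, jacobiSym.mul_left, J_one' r a hao (ha1.of_dvd (Dvd.intro _ rfl)), mul_one,
      jacobiSym.quadratic_reciprocity_one_mod_four' (hqp.odd_of_ne_two hq2) ha4,
      ← jacobiSym.legendreSym.to_jacobiSym, legendreSym]
    have : ((a : ℤ) : ZMod q) = b := by
      rw [Int.cast_natCast, (ZMod.natCast_eq_natCast_iff _ _ _).2 ha2, ZMod.natCast_zmod_val]
    rw [this, hb]
  · push Not at hq
    -- odd parts
    have hodd : ∀ m : ℕ, Odd m → (m : ℤ) ∣ D → m ∣ n := by
      intro m hm hmD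
      have hmsq : Squarefree m := by
        have h1 := Squarefree.squarefree_of_dvd hmD hD
        exact Int.squarefree_natCast.1 h1
      rw [← Nat.prod_primeFactors_of_squarefree hmsq]
      apply Finset.prod_primes_dvd
      · intro q hq; exact (Nat.prime_of_mem_primeFactors hq).prime
      · intro q hq'
        have h1 := Nat.dvd_of_mem_primeFactors hq'
        apply hq q (Nat.prime_of_mem_primeFactors hq')
        · rintro rfl
          have := Nat.odd_iff.1 hm
          omega
        · exact (Int.natCast_dvd_natCast.2 h1).trans hmD
    have hn0 : n ≠ 0 := hn.ne_zero
    have hnodd : ∃ n' : ℕ, Odd n' ∧ (∀ m, Odd m → m ∣ n → m ∣ n') ∧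
        (∀ a, Odd a → a ≡ 1 [MOD n'] → a ≡ 1 [MOD n]) := by
      rcases Nat.even_or_odd n with he | ho
      · obtain ⟨t, ht⟩ := he.two_dvd
        have hto : Odd t := by
          rw [← Nat.not_even_iff_odd]
          intro h
          obtain ⟨u, hu⟩ := h.two_dvd
          have := hn 2 ⟨u, by rw [ht, hu]; ring⟩
          simp at this
        refine ⟨t, hto, ?_, ?_⟩
        · intro m hm hmn
          rw [ht] at hmn
          exact Nat.Coprime.dvd_of_dvd_mul_left (Nat.Coprime.symm (Nat.coprime_two_left.2 hm)) hmn
        · intro a ha hat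
          rw [ht, ← Nat.modEq_and_modEq_iff_modEq_mul (Nat.coprime_two_left.2 hto)]
          exact ⟨(Nat.odd_iff.1 ha : a % 2 = 1), hat⟩
      · exact ⟨n, ho, fun m _ h => h, fun a _ h => h⟩
    obtain ⟨n', hn'o, hn'1, hn'2⟩ := hnodd
    have hD4 : D % 4 ≠ 0 := by
      intro h
      have : (2 : ℤ) * 2 ∣ D := by omega
      have := hD _ this
      rw [Int.isUnit_iff] at this
      omega
    have key : ∀ m : ℕ, Odd m → (m : ℤ) ∣ D → m ∣ n' := fun m hm hmD => hn'1 m hm (hodd m hm hmD)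
    rcases (by omega : D % 4 = 1 ∨ D % 4 = 3 ∨ D % 4 = 2) with h | h | h
    · exfalso
      rw [if_pos h] at hd
      apply hd
      rw [← Int.natAbs_dvd]
      exact Int.natCast_dvd_natCast.2 (hodd _ (Nat.odd_iff.2 (by omega)) (Int.natAbs_dvd.2 dvd_rfl))
    · have hco : Nat.Coprime n' 4 := by
        have : Nat.Coprime n' 2 := (Nat.coprime_two_left.2 hn'o).symm
        exact (Nat.Coprime.pow_right 2 this)
      obtain ⟨a, ha1, ha2⟩ := Nat.chineseRemainder hco 1 3
      have ha4 : a % 4 = 3 := ha2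
      have hao : Odd a := Nat.odd_iff.2 (by omega)
      refine ⟨a, hao, hn'2 a hao ha1, ?_⟩
      have e : D = -(-D) := by ring
      rw [e, jacobiSym.neg _ hao, ZMod.χ₄_nat_three_mod_four ha4, J_one (-D) (by omega) a hao]
      · rfl
      · rw [neg_dvd, ← Int.natAbs_dvd]
        refine dvd_trans (Int.natCast_dvd_natCast.2
          (key D.natAbs (Nat.odd_iff.2 (by omega)) (Int.natAbs_dvd.2 dvd_rfl))) ?_
        exact_mod_cast Int.modEq_iff_dvd.1 ((Int.natCast_modEq_iff.2 ha1).symm)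
    · have hco : Nat.Coprime n' 8 := by
        have : Nat.Coprime n' 2 := (Nat.coprime_two_left.2 hn'o).symm
        exact (Nat.Coprime.pow_right 3 this)
      obtain ⟨a, ha1, ha2⟩ := Nat.chineseRemainder hco 1 5
      have ha8 : a % 8 = 5 := ha2
      have hao : Odd a := Nat.odd_iff.2 (by omega)
      refine ⟨a, hao, hn'2 a hao ha1, ?_⟩
      rw [← jacobiSym.even_odd (by omega) (Nat.odd_iff.1 hao), if_pos (Or.inr ha8)]
      obtain ⟨s, hs⟩ : (2 : ℤ) ∣ D := by omega
      have hs2 : D / 2 = s := by omega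
      rw [hs2, J_one' s a hao]
      have hso : Odd s.natAbs := Nat.odd_iff.2 (by omega)
      rw [← Nat.modEq_and_modEq_iff_modEq_mul]
      · refine ⟨(by omega : a % 4 = 1), ha1.of_dvd (key _ hso (Int.natAbs_dvd.2 ?_))⟩
        rw [hs]; exact Dvd.intro_left _ rfl
      · exact Nat.Coprime.pow_left 2 (Nat.coprime_two_left.2 hso)

end Jac

end ArtinRatio


namespace ArtinRatio

section JDens

lemma dens_modEq (n : ℕ) (hn : n ≠ 0) :
    Dens (fun p => if p ≡ 1 [MOD n] then 1 else 0) (n.totient : ℝ)⁻¹ := by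
  have : NeZero n := ⟨hn⟩
  classical
  have h := dens_class (q := n) (a := 1) isUnit_one
  refine h.congr_large 0 ?_
  intro p _ _
  have : ((p : ZMod n) = 1) ↔ p ≡ 1 [MOD n] := by
    rw [← ZMod.natCast_eq_natCast_iff, Nat.cast_one]
  simp only [this]

lemma J_congr (D : ℤ) {a b : ℕ} (ha : Odd a) (hb : Odd b) (h : a ≡ b [MOD 4 * D.natAbs]) :
    jacobiSym D a = jacobiSym D b := by
  rw [jacobiSym.mod_right D ha, h, ← jacobiSym.mod_right D hb]

lemma dens_J_zero (D : ℤ) (hD : D ≠ 0) (n : ℕ) (hn : n ≠ 0) (a₀ : ℕ) (ho : Odd a₀)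
    (h1 : a₀ ≡ 1 [MOD n]) (hJ : jacobiSym D a₀ = -1) :
    Dens (fun p => if p ≡ 1 [MOD n] then (jacobiSym D p : ℝ) else 0) 0 := by
  classical
  set Q := 4 * D.natAbs * n with hQ
  have hQ0 : Q ≠ 0 := by
    have : D.natAbs ≠ 0 := Int.natAbs_ne_zero.2 hD
    positivity
  have : NeZero Q := ⟨hQ0⟩
  have hQn : n ∣ Q := Dvd.intro_left _ rfl
  have hQD : 4 * D.natAbs ∣ Q := Dvd.intro _ rfl
  have hQ2 : 2 ∣ Q := ⟨2 * D.natAbs * n, by rw [hQ]; ring⟩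
  set F : (ZMod Q)ˣ → ℝ := fun u =>
    if (u : ZMod Q).val ≡ 1 [MOD n] then (jacobiSym D (u : ZMod Q).val : ℝ) else 0 with hF
  have hodd : ∀ u : (ZMod Q)ˣ, Odd (u : ZMod Q).val := by
    intro u
    have := ZMod.val_coe_unit_coprime u
    exact Nat.coprime_two_left.1 (this.symm.coprime_dvd_left hQ2)
  have hcop : Nat.Coprime a₀ Q := by
    have c1 : Nat.Coprime a₀ 4 :=
      Nat.Coprime.pow_right 2 (Nat.coprime_two_left.2 ho).symm
    have c2 : Nat.Coprime a₀ D.natAbs := by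
      by_contra hc
      have : jacobiSym D a₀ = 0 := by
        rw [jacobiSym.eq_zero_iff]
        refine ⟨by rintro rfl; simp at ho, ?_⟩
        intro h
        apply hc
        rw [Int.gcd] at h
        rw [Nat.coprime_comm]
        simpa using h
      omega
    have c3 : Nat.Coprime a₀ n := by
      have := h1.gcd_eq
      rw [Nat.Coprime, Nat.gcd_comm, Nat.gcd_comm] at *
      simpa using this
    exact Nat.Coprime.mul_right (Nat.Coprime.mul_right c1 c2) c3
  set u₀ : (ZMod Q)ˣ := ZMod.unitOfCoprime a₀ hcop with hu0
  have hval : ∀ u : (ZMod Q)ˣ, ((u₀ * u : (ZMod Q)ˣ) : ZMod Q).val ≡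
      a₀ * (u : ZMod Q).val [MOD Q] := by
    intro u
    rw [← ZMod.natCast_eq_natCast_iff]
    simp [hu0]
  have hFneg : ∀ u, F (u₀ * u) = - F u := by
    intro u
    simp only [hF]
    have e1 : ((u₀ * u : (ZMod Q)ˣ) : ZMod Q).val ≡ (u : ZMod Q).val [MOD n] := by
      have := ((hval u).of_dvd hQn).trans (h1.mul_right (u : ZMod Q).val)
      simpa using this
    have e2 : (((u₀ * u : (ZMod Q)ˣ) : ZMod Q).val ≡ 1 [MOD n]) ↔
        ((u : ZMod Q).val ≡ 1 [MOD n]) := ⟨fun h => e1.symm.trans h, fun h => e1.trans h⟩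
    simp only [e2]
    split_ifs
    · rw [J_congr D (hodd _) (ho.mul (hodd u)) ((hval u).of_dvd hQD), jacobiSym.mul_right', hJ]
      · push_cast; ring
      · rintro rfl; simp at ho
      · intro h
        have := hodd u
        rw [h] at this
        simp at this
    · simp
  have hsum : ∑ u, F u = 0 := by
    have e := Equiv.sum_comp (Equiv.mulLeft u₀) F
    simp only [Equiv.coe_mulLeft, hFneg, Finset.sum_neg_distrib] at e
    linarith
  have hd := Dens.sum (Finset.univ : Finset (ZMod Q)ˣ)
    (a := fun u p => F u * (if (p : ZMod Q) = u then 1 else 0))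
    (c := fun u => F u * (Q.totient : ℝ)⁻¹)
    (fun u _ => (dens_class (a := (u : ZMod Q)) u.isUnit).const_mul (F u))
  rw [← Finset.sum_mul, hsum, zero_mul] at hd
  refine hd.congr_large (Q + 1) ?_
  intro p hp hpQ
  have hpc : Nat.Coprime p Q := by
    rw [Nat.Prime.coprime_iff_not_dvd hp]
    intro h
    have := Nat.le_of_dvd (Nat.pos_of_ne_zero hQ0) h
    omega
  set up := ZMod.unitOfCoprime p hpc with hup
  have hupv : ((up : (ZMod Q)ˣ) : ZMod Q) = p := by simp [hup]
  rw [Finset.sum_eq_single up]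
  · rw [if_pos hupv.symm, mul_one]
    have hv : (up : ZMod Q).val ≡ p [MOD Q] := by
      rw [← ZMod.natCast_eq_natCast_iff]; simp [hup]
    simp only [hF]
    have e2 : ((up : ZMod Q).val ≡ 1 [MOD n]) ↔ (p ≡ 1 [MOD n]) :=
      ⟨fun h => (hv.of_dvd hQn).symm.trans h, fun h => (hv.of_dvd hQn).trans h⟩
    simp only [e2]
    rw [J_congr D (hodd up) (Nat.coprime_two_left.1 (hpc.symm.coprime_dvd_left hQ2))
      (hv.of_dvd hQD)]
  · intro u _ hu
    rw [if_neg, mul_zero]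
    intro h
    apply hu
    ext
    rw [hupv, h]
  · simp

lemma dens_J (D : ℤ) (hD : Squarefree D) (n : ℕ) (hn : Squarefree n) :
    Dens (fun p => if p ≡ 1 [MOD n] then (jacobiSym D p : ℝ) else 0)
      (if ((if D % 4 = 1 then D else 4 * D) ∣ (n : ℤ)) then (n.totient : ℝ)⁻¹ else 0) := by
  split_ifs with h1 h2 h2
  · refine (dens_modEq n hn.ne_zero).congr_large 3 ?_
    intro p hp hp3
    split_ifs with h
    · rw [J_one D h1 p (hp.odd_of_ne_two (by omega)), Int.cast_one]
      exact h2.trans (by exact_mod_cast Int.modEq_iff_dvd.1 ((Int.natCast_modEq_iff.2 h).symm))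
    · rfl
  · obtain ⟨a, ha1, ha2, ha3⟩ := exists_a0 D hD n hn (by rw [if_pos h1]; exact h2)
    exact dens_J_zero D hD.ne_zero n hn.ne_zero a ha1 ha2 ha3
  · exfalso
    have : (2:ℤ) * 2 ∣ n := (Dvd.intro _ (by ring : (2:ℤ) * 2 * D = 4 * D)).trans h2
    have h3 : 2 * 2 ∣ n := by exact_mod_cast this
    have := hn _ h3
    simp at this
  · obtain ⟨a, ha1, ha2, ha3⟩ := exists_a0 D hD n hn (by rw [if_neg h1]; exact h2)
    exact dens_J_zero D hD.ne_zero n hn.ne_zero a ha1 ha2 ha3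

end JDens

end ArtinRatio


namespace ArtinRatio

section Expand

noncomputable def Fprod (T : Finset ℕ) (c : ℕ → ℝ) (p : ℕ) : ℝ :=
  ∏ l ∈ T, (1 + -c l * (if p ≡ 1 [MOD l] then 1 else 0))

lemma prod_primes_props (S : Finset ℕ) (hS : ∀ l ∈ S, l.Prime) :
    Squarefree (∏ l ∈ S, l) ∧ (((∏ l ∈ S, l).totient : ℝ)) = ∏ l ∈ S, ((l : ℝ) - 1) ∧
    ∀ p : ℕ, ∏ l ∈ S, (if p ≡ 1 [MOD l] then (1:ℝ) else 0) =
      if p ≡ 1 [MOD ∏ l ∈ S, l] then 1 else 0 := by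
  induction S using Finset.induction_on with
  | empty => simp [Nat.modEq_one]
  | insert l S hl ih =>
    obtain ⟨h1, h2, h3⟩ := ih (fun x hx => hS x (Finset.mem_insert_of_mem hx))
    have hlp := hS l (Finset.mem_insert_self _ _)
    have hco : Nat.Coprime l (∏ x ∈ S, x) := by
      apply Nat.Coprime.prod_right
      intro x hx
      rw [Nat.coprime_primes hlp (hS x (Finset.mem_insert_of_mem hx))]
      rintro rfl
      exact hl hx
    simp only [Finset.prod_insert hl]
    refine ⟨?_, ?_, ?_⟩
    · rw [Nat.squarefree_mul hco]
      exact ⟨hlp.prime.squarefree, h1⟩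
    · rw [Nat.totient_mul hco, Nat.totient_prime hlp, ← h2]
      push_cast [hlp.one_lt.le]
      ring
    · intro p
      rw [h3 p]
      simp only [← Nat.modEq_and_modEq_iff_modEq_mul hco]
      by_cases a : p ≡ 1 [MOD l] <;> by_cases b : p ≡ 1 [MOD ∏ x ∈ S, x] <;> simp [a, b]

lemma Fprod_expand (T : Finset ℕ) (hT : ∀ l ∈ T, l.Prime) (c : ℕ → ℝ) (p : ℕ) :
    Fprod T c p = ∑ S ∈ T.powerset, (∏ l ∈ S, -c l) *
      (if p ≡ 1 [MOD ∏ l ∈ S, l] then 1 else 0) := by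
  unfold Fprod
  rw [Finset.prod_one_add]
  apply Finset.sum_congr rfl
  intro S hS
  rw [Finset.mem_powerset] at hS
  rw [Finset.prod_mul_distrib, (prod_primes_props S (fun l hl => hT l (hS hl))).2.2]

lemma dens_F (T : Finset ℕ) (hT : ∀ l ∈ T, l.Prime) (c : ℕ → ℝ) :
    Dens (Fprod T c) (∏ l ∈ T, (1 + -c l / ((l:ℝ) - 1))) := by
  have h := Dens.sum T.powerset
    (a := fun S p => (∏ l ∈ S, -c l) * (if p ≡ 1 [MOD ∏ l ∈ S, l] then 1 else 0))
    (c := fun S => ∏ l ∈ S, (-c l / ((l:ℝ) - 1))) (by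
      intro S hS
      rw [Finset.mem_powerset] at hS
      have hp := prod_primes_props S (fun l hl => hT l (hS hl))
      have := (dens_modEq _ hp.1.ne_zero).const_mul (∏ l ∈ S, -c l)
      rw [hp.2.1, ← div_eq_mul_inv, ← Finset.prod_div_distrib] at this
      exact this)
  rw [← Finset.prod_one_add] at h
  exact h.congr_large 0 (fun p _ _ => (Fprod_expand T hT c p).symm)

lemma dvd_prod_iff (D : ℤ) (hD : Squarefree D) (S : Finset ℕ) (hS : ∀ l ∈ S, l.Prime) :
    D ∣ ((∏ l ∈ S, l : ℕ) : ℤ) ↔ D.natAbs.primeFactors ⊆ S := by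
  rw [Int.dvd_natCast]
  have hD' : Squarefree D.natAbs := Int.squarefree_natAbs.2 hD
  constructor
  · intro h q hq
    have hqp := Nat.prime_of_mem_primeFactors hq
    have h1 := (Nat.dvd_of_mem_primeFactors hq).trans h
    rw [Prime.dvd_finsetProd_iff hqp.prime] at h1
    obtain ⟨l, hl, hql⟩ := h1
    rw [Nat.prime_dvd_prime_iff_eq hqp (hS l hl)] at hql
    rwa [hql]
  · intro h
    rw [← Nat.prod_primeFactors_of_squarefree hD']
    exact Finset.prod_dvd_prod_of_subset _ _ _ h

lemma dens_JF (D : ℤ) (hD : Squarefree D) (T : Finset ℕ) (hT : ∀ l ∈ T, l.Prime)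
    (hP : D.natAbs.primeFactors ⊆ T) (c : ℕ → ℝ) :
    Dens (fun p => (jacobiSym D p : ℝ) * Fprod T c p) (if D % 4 = 1 then
      ∏ l ∈ T, (-c l / ((l:ℝ) - 1) + if l ∈ D.natAbs.primeFactors then 0 else 1) else 0) := by
  have h := Dens.sum T.powerset
    (a := fun S p => (∏ l ∈ S, -c l) *
      (if p ≡ 1 [MOD ∏ l ∈ S, l] then (jacobiSym D p : ℝ) else 0))
    (c := fun S => if D % 4 = 1 then (∏ l ∈ S, (-c l / ((l:ℝ) - 1))) *
      (∏ l ∈ T \ S, if l ∈ D.natAbs.primeFactors then 0 else 1) else 0) (by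
      intro S hS
      rw [Finset.mem_powerset] at hS
      have hSp := (fun l hl => hT l (hS hl) : ∀ l ∈ S, l.Prime)
      have hp := prod_primes_props S hSp
      have := (dens_J D hD _ hp.1).const_mul (∏ l ∈ S, -c l)
      convert this using 1
      split_ifs with h1 h2 h2
      · rw [hp.2.1, ← div_eq_mul_inv, ← Finset.prod_div_distrib]
        rw [dvd_prod_iff D hD S hSp] at h2
        rw [Finset.prod_eq_one (s := T \ S), mul_one]
        intro l hl
        rw [Finset.mem_sdiff] at hl
        rw [if_neg (fun hh => hl.2 (h2 hh))]
      · rw [dvd_prod_iff D hD S hSp] at h2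
        obtain ⟨l, hl1, hl2⟩ := Finset.not_subset.1 h2
        rw [Finset.prod_eq_zero (s := T \ S) (i := l), mul_zero, mul_zero]
        · exact Finset.mem_sdiff.2 ⟨hP hl1, hl2⟩
        · rw [if_pos hl1]
      · exfalso
        have : (2:ℤ) * 2 ∣ (∏ l ∈ S, l : ℕ) :=
          (Dvd.intro _ (by ring : (2:ℤ) * 2 * D = 4 * D)).trans h2
        have h3 : 2 * 2 ∣ ∏ l ∈ S, l := by exact_mod_cast this
        have := hp.1 _ h3
        simp at this
      · simp)
  have e : ∑ S ∈ T.powerset, (if D % 4 = 1 then (∏ l ∈ S, (-c l / ((l:ℝ) - 1))) *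
      (∏ l ∈ T \ S, if l ∈ D.natAbs.primeFactors then (0:ℝ) else 1) else 0) =
      if D % 4 = 1 then
      ∏ l ∈ T, (-c l / ((l:ℝ) - 1) + if l ∈ D.natAbs.primeFactors then 0 else 1) else 0 := by
    split_ifs
    · rw [Finset.prod_add]
    · simp
  rw [e] at h
  refine h.congr_large 0 (fun p _ _ => ?_)
  rw [Fprod_expand T hT c p, Finset.mul_sum]
  apply Finset.sum_congr rfl
  intro S _
  split_ifs <;> ring

lemma dens_main (D : ℤ) (hD : Squarefree D) (T : Finset ℕ) (hT : ∀ l ∈ T, l.Prime)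
    (hP : D.natAbs.primeFactors ⊆ T) (c : ℕ → ℝ)
    (hc : ∀ l ∈ D.natAbs.primeFactors, (l:ℝ) - 1 - c l ≠ 0) :
    Dens (fun p => (1 - (jacobiSym D p : ℝ)) / 2 * Fprod T c p)
      (1 / 2 * (∏ l ∈ T, (1 + -c l / ((l:ℝ) - 1))) *
        (1 - if D % 4 = 1 then ∏ l ∈ D.natAbs.primeFactors, (-c l / ((l:ℝ) - 1 - c l)) else 0)) := by
  have h := ((dens_F T hT c).const_mul (1 / 2)).add ((dens_JF D hD T hT hP c).const_mul (-1 / 2))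
  convert h using 1
  · ext p; ring
  · split_ifs with h1
    · have e : ∏ l ∈ T, (-c l / ((l:ℝ) - 1) + if l ∈ D.natAbs.primeFactors then 0 else 1) =
        (∏ l ∈ T, (1 + -c l / ((l:ℝ) - 1))) *
          ∏ l ∈ D.natAbs.primeFactors, (-c l / ((l:ℝ) - 1 - c l)) := by
        have e2 : ∏ l ∈ D.natAbs.primeFactors, (-c l / ((l:ℝ) - 1 - c l)) =
            ∏ l ∈ T, if l ∈ D.natAbs.primeFactors then (-c l / ((l:ℝ) - 1 - c l)) else 1 := by
          rw [Finset.prod_ite_mem, Finset.inter_eq_right.2 hP]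
        rw [e2, ← Finset.prod_mul_distrib]
        apply Finset.prod_congr rfl
        intro l hl
        split_ifs with hlP
        · have a1 := hc l hlP
          have a2 : (l:ℝ) - 1 ≠ 0 := by
            have : (1:ℝ) < l := by exact_mod_cast (hT l hl).one_lt
            linarith
          field_simp
          ring
        · ring
      rw [e]; ring
    · ring

end Expand

end ArtinRatio


namespace ArtinRatio

section Values

noncomputable def cN (h l : ℕ) : ℝ := if l ∣ h then 1 else 1 / (l : ℝ)
noncomputable def cD (h l : ℕ) : ℝ := if l ∣ h then 1 else 0

noncomputable def M1 (h : ℕ) (D : ℤ) : ℝ :=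
  if D % 4 = 1 then ∏ l ∈ D.natAbs.primeFactors, (-cN h l / ((l:ℝ) - 1 - cN h l)) else 0
noncomputable def M2 (h : ℕ) (D : ℤ) : ℝ :=
  if D % 4 = 1 then ∏ l ∈ D.natAbs.primeFactors, (-cD h l / ((l:ℝ) - 1 - cD h l)) else 0

noncomputable def dl (h : ℕ) (D : ℤ) : ℝ :=
  1 / 2 * (∏ l ∈ h.primeFactors, (1 + -1 / ((l:ℝ) - 1))) * (1 - M2 h D)

noncomputable def Ad (h : ℕ) (d : ℤ) : ℝ := if d ∣ (h : ℤ) then (1 : ℝ) else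
          1 - (ArithmeticFunction.moebius d.natAbs : ℝ) *
            (∏ q ∈ d.natAbs.primeFactors.filter (fun q => q ∣ h), (1 / ((q : ℝ) - 2))) *
            (∏ q ∈ d.natAbs.primeFactors.filter (fun q => ¬ q ∣ h),
              (1 / ((q : ℝ) ^ 2 - q - 1)))

lemma three_le {h l : ℕ} (ho : Odd h) (hl : l.Prime) (hlh : l ∣ h) : 3 ≤ l := by
  have := hl.two_le
  have : l ≠ 2 := by
    rintro rfl
    have := Nat.odd_iff.1 ho
    omega
  omega

lemma three_le' {h l : ℕ} (ho : Odd h) (hl : l.Prime) (hlh : l ∣ h) : (3:ℝ) ≤ l := by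
  exact_mod_cast three_le ho hl hlh

lemma cN_ne {h l : ℕ} (ho : Odd h) (hl : l.Prime) : (l:ℝ) - 1 - cN h l ≠ 0 := by
  unfold cN
  split_ifs with hlh
  · have := three_le' ho hl hlh
    linarith
  · have h2 : (2:ℝ) ≤ l := by exact_mod_cast hl.two_le
    have : 1 / (l:ℝ) ≤ 1 / 2 := by gcongr
    linarith

lemma cD_ne {h l : ℕ} (ho : Odd h) (hl : l.Prime) : (l:ℝ) - 1 - cD h l ≠ 0 := by
  unfold cD
  split_ifs with hlh
  · have := three_le' ho hl hlh
    linarith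
  · have h2 : (2:ℝ) ≤ l := by exact_mod_cast hl.two_le
    linarith

lemma M2_ne_one {h : ℕ} (ho : Odd h) {D : ℤ} (hD1 : D ≠ 1) : M2 h D ≠ 1 := by
  unfold M2
  split_ifs with h4
  swap
  · norm_num
  set P := D.natAbs.primeFactors with hP
  set f : ℕ → ℝ := fun l => -cD h l / ((l:ℝ) - 1 - cD h l) with hf
  have hab : ∀ l ∈ P, |f l| ≤ 1 ∧ (l ≠ 3 → |f l| < 1) := by
    intro l hl
    have hlp := Nat.prime_of_mem_primeFactors hl
    simp only [hf, cD]
    split_ifs with hlh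
    · have h3 := three_le' ho hlp hlh
      rw [abs_div, abs_neg, abs_one, abs_of_pos (by linarith)]
      constructor
      · rw [div_le_one (by linarith)]; linarith
      · intro hne
        have h4 : (4:ℝ) ≤ l := by
          have := three_le ho hlp hlh
          exact_mod_cast (by omega : 4 ≤ l)
        rw [div_lt_one (by linarith)]; linarith
    · simp
  have hne : P.Nonempty := by
    rw [hP, Nat.nonempty_primeFactors]
    omega
  by_cases hex : ∃ l ∈ P, l ≠ 3
  · obtain ⟨l, hl, hl3⟩ := hex
    have h1 : |∏ l ∈ P, f l| < 1 := by
      rw [Finset.abs_prod, ← Finset.mul_prod_erase P _ hl]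
      have a1 : ∏ x ∈ P.erase l, |f x| ≤ 1 :=
        Finset.prod_le_one (fun _ _ => abs_nonneg _)
          (fun x hx => (hab x (Finset.mem_of_mem_erase hx)).1)
      have a2 := (hab l hl).2 hl3
      have a3 : 0 ≤ ∏ x ∈ P.erase l, |f x| := Finset.prod_nonneg (fun _ _ => abs_nonneg _)
      nlinarith [abs_nonneg (f l)]
    intro h2
    rw [h2] at h1
    simp at h1
  · push Not at hex
    have hP3 : P = {3} := by
      obtain ⟨l, hl⟩ := hne
      ext x
      rw [Finset.mem_singleton]
      constructor
      · exact hex x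
      · rintro rfl
        rwa [← hex l hl]
    rw [hP3, Finset.prod_singleton]
    simp only [cD]
    split_ifs <;> norm_num

lemma dl_ne_zero {h : ℕ} (ho : Odd h) {D : ℤ} (hD1 : D ≠ 1) : dl h D ≠ 0 := by
  unfold dl
  have h1 := M2_ne_one ho hD1
  refine mul_ne_zero (mul_ne_zero (by norm_num) ?_) (sub_ne_zero.2 (Ne.symm h1))
  rw [Finset.prod_ne_zero_iff]
  intro l hl
  have h3 := three_le' ho (Nat.prime_of_mem_primeFactors hl) (Nat.dvd_of_mem_primeFactors hl)
  have : (l:ℝ) - 1 ≠ 0 := by linarith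
  intro hh
  field_simp at hh
  linarith

lemma moebius_prod (n : ℕ) (hn : Squarefree n) :
    (ArithmeticFunction.moebius n : ℝ) = ∏ _l ∈ n.primeFactors, (-1 : ℝ) := by
  rw [← ArithmeticFunction.isMultiplicative_moebius.prod_primeFactors hn, Int.cast_prod]
  apply Finset.prod_congr rfl
  intro l hl
  rw [ArithmeticFunction.moebius_apply_prime (Nat.prime_of_mem_primeFactors hl)]
  norm_num

lemma M1_eq {h : ℕ} (ho : Odd h) {D d : ℤ} (hD : Squarefree D)
    (hd : d = if D % 4 = 1 then D else 4 * D) :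
    1 - M1 h D = (1 - M2 h D) * Ad h d := by
  have hDn : Squarefree D.natAbs := Int.squarefree_natAbs.2 hD
  have hh0 : h ≠ 0 := by rintro rfl; simp at ho
  unfold Ad
  by_cases h4 : D % 4 = 1
  · rw [if_pos h4] at hd
    subst hd
    by_cases hdh : d ∣ (h : ℤ)
    · rw [if_pos hdh, mul_one]
      unfold M1 M2
      rw [if_pos h4, if_pos h4]
      congr 1
      apply Finset.prod_congr rfl
      intro l hl
      have : l ∣ h := (Nat.dvd_of_mem_primeFactors hl).trans (Int.dvd_natCast.1 hdh)
      simp [cN, cD, this]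
    · rw [if_neg hdh]
      have hM2 : M2 h d = 0 := by
        unfold M2
        rw [if_pos h4]
        by_contra hne
        have hne := Finset.prod_ne_zero_iff.1 hne
        apply hdh
        rw [Int.dvd_natCast, ← Nat.prod_primeFactors_of_squarefree hDn]
        apply Finset.prod_primes_dvd
        · intro q hq; exact (Nat.prime_of_mem_primeFactors hq).prime
        · intro q hq
          by_contra hqh
          apply hne q hq
          simp [cD, hqh]
      rw [hM2, sub_zero, one_mul]
      congr 1
      rw [moebius_prod _ hDn, mul_assoc, Finset.prod_filter, Finset.prod_filter,
        ← Finset.prod_mul_distrib, ← Finset.prod_mul_distrib]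
      unfold M1
      rw [if_pos h4]
      apply Finset.prod_congr rfl
      intro l hl
      have hlp := Nat.prime_of_mem_primeFactors hl
      have hne := cN_ne ho hlp
      unfold cN at *
      split_ifs at * with hlh
      · have e : (l:ℝ) - 1 - 1 = l - 2 := by ring
        rw [e]; ring
      · have hl0 : (l:ℝ) ≠ 0 := by exact_mod_cast hlp.ne_zero
        have e : (l:ℝ) - 1 - 1 / l = (l ^ 2 - l - 1) / l := by field_simp
        rw [e] at hne ⊢
        have : (l:ℝ) ^ 2 - l - 1 ≠ 0 := fun hh => hne (by rw [hh, zero_div])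
        field_simp
  · rw [if_neg h4] at hd
    have hM1 : M1 h D = 0 := by simp [M1, h4]
    have hM2 : M2 h D = 0 := by simp [M2, h4]
    have hdh : ¬ d ∣ (h : ℤ) := by
      rintro ⟨t, ht⟩
      have := Nat.odd_iff.1 ho
      have : (h:ℤ) = 2 * (2 * D * t) := by rw [ht, hd]; ring
      omega
    have hmu : ArithmeticFunction.moebius d.natAbs = 0 := by
      apply ArithmeticFunction.moebius_eq_zero_of_not_squarefree
      intro hs
      have := hs 2 ⟨D.natAbs, by rw [hd, Int.natAbs_mul]; rfl⟩
      simp at this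
    rw [if_neg hdh, hM1, hM2, hmu]
    simp

/-- primes up to Y -/
def PY (Y : ℕ) : Finset ℕ := (Finset.range (Y + 1)).filter Nat.Prime

noncomputable def LY (h Y : ℕ) : ℝ :=
  ∏ l ∈ PY Y, if l ∣ h then (1:ℝ) else 1 - 1 / ((l:ℝ) * ((l:ℝ) - 1))

lemma PY_prime {Y l : ℕ} (hl : l ∈ PY Y) : l.Prime := (Finset.mem_filter.1 hl).2

lemma sub_PY {m Y : ℕ} (hm : m ≤ Y) : m.primeFactors ⊆ PY Y := by
  intro l hl
  have h1 := Nat.le_of_mem_primeFactors hl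
  exact Finset.mem_filter.2 ⟨Finset.mem_range.2 (by omega), Nat.prime_of_mem_primeFactors hl⟩

lemma prod_cD {h Y : ℕ} (ho : Odd h) (hY : h ≤ Y) :
    ∏ l ∈ PY Y, (1 + -cD h l / ((l:ℝ) - 1)) =
      ∏ l ∈ h.primeFactors, (1 + -1 / ((l:ℝ) - 1)) := by
  have hh0 : h ≠ 0 := by rintro rfl; simp at ho
  rw [← Finset.prod_subset (sub_PY hY)]
  · apply Finset.prod_congr rfl
    intro l hl
    simp [cD, Nat.dvd_of_mem_primeFactors hl]
  · intro l hl hl'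
    have : ¬ l ∣ h := fun hd => hl' (Nat.mem_primeFactors.2 ⟨PY_prime hl, hd, hh0⟩)
    simp [cD, this]

lemma prod_cN {h Y : ℕ} (ho : Odd h) (hY : h ≤ Y) :
    ∏ l ∈ PY Y, (1 + -cN h l / ((l:ℝ) - 1)) =
      LY h Y * ∏ l ∈ h.primeFactors, (1 + -1 / ((l:ℝ) - 1)) := by
  rw [← prod_cD ho hY, LY, ← Finset.prod_mul_distrib]
  apply Finset.prod_congr rfl
  intro l hl
  have h1 : (1:ℝ) < l := by exact_mod_cast (PY_prime hl).one_lt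
  have h2 : (l:ℝ) - 1 ≠ 0 := by linarith
  have h3 : (l:ℝ) ≠ 0 := by linarith
  unfold cN cD
  split_ifs
  · ring
  · field_simp
    ring

lemma dens_den {h : ℕ} (ho : Odd h) {D : ℤ} (hD : Squarefree D) (Y : ℕ) (hY : h ≤ Y)
    (hYD : D.natAbs ≤ Y) :
    Dens (fun p => (1 - (jacobiSym D p : ℝ)) / 2 * Fprod (PY Y) (cD h) p) (dl h D) := by
  have := dens_main D hD (PY Y) (fun l hl => PY_prime hl) (sub_PY hYD) (cD h)
    (fun l hl => cD_ne ho (Nat.prime_of_mem_primeFactors hl))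
  rw [prod_cD ho hY] at this
  exact this

lemma dens_num {h : ℕ} (ho : Odd h) {D d : ℤ} (hD : Squarefree D)
    (hd : d = if D % 4 = 1 then D else 4 * D) (Y : ℕ) (hY : h ≤ Y) (hYD : D.natAbs ≤ Y) :
    Dens (fun p => (1 - (jacobiSym D p : ℝ)) / 2 * Fprod (PY Y) (cN h) p)
      (LY h Y * Ad h d * dl h D) := by
  have := dens_main D hD (PY Y) (fun l hl => PY_prime hl) (sub_PY hYD) (cN h)
    (fun l hl => cN_ne ho (Nat.prime_of_mem_primeFactors hl))
  rw [prod_cN ho hY] at this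
  convert this using 1
  have e := M1_eq ho hD hd
  unfold M1 at e
  rw [e, dl]
  ring

end Values

end ArtinRatio


namespace ArtinRatio

section Final

lemma PS_nonneg_le (a b : ℕ → ℝ) (k N : ℕ) (h : ∀ p, p.Prime → |a p| ≤ b p) :
    |PS a k N| ≤ PS b k N := by
  unfold PS
  refine (Finset.abs_sum_le_sum_abs _ _).trans (Finset.sum_le_sum ?_)
  intro p hp
  have hp' := (Finset.mem_filter.1 hp).2
  have h1 : (1:ℝ) < p := by exact_mod_cast hp'.one_lt
  have h2 : 0 ≤ (p:ℝ) ^ k * ((p:ℝ) - 1) := mul_nonneg (by positivity) (by linarith)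
  rw [abs_mul, abs_of_nonneg h2]
  exact mul_le_mul_of_nonneg_right (h p hp') h2

lemma W_pos (k : ℕ) : ∀ᶠ N in atTop, 0 < PS (fun _ => 1) k N := by
  obtain ⟨c, hc, hW⟩ := W_lower k
  filter_upwards [hW, eventually_ge_atTop 2] with N hN hN2
  exact lt_of_lt_of_le (mul_pos hc (Gw_pos k N hN2)) hN

lemma lim_of_approx (k : ℕ) (a : ℕ → ℝ) (b : ℕ → ℕ → ℝ) (c : ℕ → ℝ) (C : ℝ)
    (hc : Tendsto c atTop (nhds C)) (hb : ∀ᶠ Y in atTop, Dens (b Y) (c Y))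
    (hab : ∀ᶠ Y in atTop, ∀ p : ℕ, p.Prime → |a p - b Y p| ≤ TY Y p) :
    Tendsto (fun N => PS a k N / PS (fun _ => 1) k N) atTop (nhds C) := by
  rw [Metric.tendsto_nhds]
  intro ε hε
  obtain ⟨Y0, hY0⟩ := tail_bound k (ε / 4) (by linarith)
  obtain ⟨Y, h1, h2, h3, h4⟩ := ((Metric.tendsto_nhds.1 hc (ε / 4) (by linarith)).and
    (hb.and (hab.and (eventually_ge_atTop Y0)))).exists
  have h5 := Metric.tendsto_nhds.1 (dens_ratio h2 k) (ε / 4) (by linarith)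
  filter_upwards [h5, hY0 Y h4, W_pos k] with N h6 h7 h8
  have h9 := PS_nonneg_le (fun p => a p + (-1) * b Y p) (TY Y) k N (by
    intro p hp
    have := h3 p hp
    rwa [neg_one_mul, ← sub_eq_add_neg])
  rw [PS_add, PS_const_mul] at h9
  rw [Real.dist_eq] at *
  have h10 : |PS a k N / PS (fun _ => 1) k N - PS (b Y) k N / PS (fun _ => 1) k N| ≤ ε / 4 := by
    rw [← sub_div, abs_div, abs_of_pos h8, div_le_iff₀ h8]
    refine le_trans (le_of_eq ?_) (h9.trans h7)
    congr 1
    ring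
  have e : PS a k N / PS (fun _ => 1) k N - C =
    (PS a k N / PS (fun _ => 1) k N - PS (b Y) k N / PS (fun _ => 1) k N) +
    (PS (b Y) k N / PS (fun _ => 1) k N - c Y) + (c Y - C) := by ring
  rw [e]
  refine lt_of_le_of_lt (abs_add_three _ _ _) ?_
  linarith

lemma one_sub_le_prod (S : Finset ℕ) (x : ℕ → ℝ) (hx : ∀ l ∈ S, 0 ≤ x l ∧ x l ≤ 1) :
    1 - ∑ l ∈ S, x l ≤ ∏ l ∈ S, (1 - x l) := by
  induction S using Finset.induction_on with
  | empty => simp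
  | insert l S hl ih =>
    rw [Finset.sum_insert hl, Finset.prod_insert hl]
    have h1 := ih (fun y hy => hx y (Finset.mem_insert_of_mem hy))
    obtain ⟨h2, h3⟩ := hx l (Finset.mem_insert_self _ _)
    have h4 : 0 ≤ ∑ y ∈ S, x y :=
      Finset.sum_nonneg (fun y hy => (hx y (Finset.mem_insert_of_mem hy)).1)
    nlinarith

lemma modEq_iff {p l : ℕ} (hp : p.Prime) : p ≡ 1 [MOD l] ↔ l ∣ p - 1 := by
  rw [← Nat.modEq_iff_dvd' hp.one_lt.le]
  exact ⟨fun h => h.symm, fun h => h.symm⟩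

lemma Fprod_zero {h Y p : ℕ} (c : ℕ → ℝ) (hh : h ≠ 0) (hY : h ≤ Y) (hp : p.Prime)
    (hc : ∀ l, l ∣ h → c l = 1) (hg : Nat.gcd (p - 1) h ≠ 1) : Fprod (PY Y) c p = 0 := by
  obtain ⟨l, hl, hlg⟩ := Nat.exists_prime_and_dvd hg
  have hl1 := hlg.trans (Nat.gcd_dvd_left _ _)
  have hl2 := hlg.trans (Nat.gcd_dvd_right _ _)
  unfold Fprod
  apply Finset.prod_eq_zero (i := l)
  · exact sub_PY hY (Nat.mem_primeFactors.2 ⟨hl, hl2, hh⟩)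
  · rw [if_pos ((modEq_iff hp).2 hl1), hc l hl2]
    ring

lemma not_dvd_of_gcd {h p l : ℕ} (hl : l.Prime) (hg : Nat.gcd (p - 1) h = 1) (hlp : l ∣ p - 1) :
    ¬ l ∣ h := by
  intro hlh
  have := Nat.dvd_gcd hlp hlh
  rw [hg] at this
  exact hl.one_lt.ne' (Nat.dvd_one.1 this)

lemma Fprod_cD {h Y p : ℕ} (hp : p.Prime) (hg : Nat.gcd (p - 1) h = 1) :
    Fprod (PY Y) (cD h) p = 1 := by
  unfold Fprod
  apply Finset.prod_eq_one
  intro l hl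
  split_ifs with h1
  · have := not_dvd_of_gcd (PY_prime hl) hg ((modEq_iff hp).1 h1)
    simp [cD, this]
  · simp

lemma Fprod_cN {h Y p : ℕ} (hp : p.Prime) (hg : Nat.gcd (p - 1) h = 1) :
    Fprod (PY Y) (cN h) p =
      ∏ l ∈ (p - 1).primeFactors.filter (fun l => ¬ Y < l), (1 - 1 / (l:ℝ)) := by
  have hp0 : p - 1 ≠ 0 := by have := hp.two_le; omega
  have e : (p - 1).primeFactors.filter (fun l => ¬ Y < l) =
      (PY Y).filter (fun l => l ∣ p - 1) := by
    ext l
    simp only [Finset.mem_filter, Nat.mem_primeFactors, PY, Finset.mem_range]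
    constructor
    · rintro ⟨⟨a, b, c⟩, f⟩; exact ⟨⟨by omega, a⟩, b⟩
    · rintro ⟨⟨a, b⟩, c⟩; exact ⟨⟨b, c, hp0⟩, by omega⟩
  rw [e, Finset.prod_filter]
  unfold Fprod
  apply Finset.prod_congr rfl
  intro l hl
  simp only [modEq_iff hp]
  split_ifs with h1
  · have := not_dvd_of_gcd (PY_prime hl) hg h1
    simp only [cN, this, if_false]
    ring
  · simp

lemma totient_real {n : ℕ} (hn : n ≠ 0) :
    (n.totient : ℝ) / n = ∏ l ∈ n.primeFactors, (1 - 1 / (l:ℝ)) := by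
  have h := Nat.totient_eq_mul_prod_factors n
  have h2 : ((n.totient : ℚ) : ℝ) = ((n * ∏ p ∈ n.primeFactors, (1 - (p:ℚ)⁻¹) : ℚ) : ℝ) := by
    rw [h]
  push_cast at h2
  have hn' : (n:ℝ) ≠ 0 := by exact_mod_cast hn
  rw [h2, mul_div_cancel_left₀ _ hn']
  simp only [one_div]

lemma approx {h Y p : ℕ} (hp : p.Prime) (hg : Nat.gcd (p - 1) h = 1) :
    |((p - 1).totient : ℝ) / ((p:ℝ) - 1) - Fprod (PY Y) (cN h) p| ≤ TY Y p := by
  have hp0 : p - 1 ≠ 0 := by have := hp.two_le; omega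
  have e : ((p:ℝ) - 1) = ((p - 1 : ℕ) : ℝ) := by
    rw [Nat.cast_sub hp.one_lt.le, Nat.cast_one]
  rw [e, totient_real hp0, Fprod_cN hp hg,
    ← Finset.prod_filter_mul_prod_filter_not (p - 1).primeFactors (fun l => Y < l)]
  set S1 := (p - 1).primeFactors.filter (fun l => Y < l) with hS1
  set S2 := (p - 1).primeFactors.filter (fun l => ¬ Y < l) with hS2
  have hx : ∀ l ∈ (p - 1).primeFactors, 0 ≤ 1 / (l:ℝ) ∧ 1 / (l:ℝ) ≤ 1 := by
    intro l hl
    have h1 : (1:ℝ) ≤ l := by exact_mod_cast (Nat.prime_of_mem_primeFactors hl).one_lt.le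
    refine ⟨by positivity, ?_⟩
    rw [div_le_one (by linarith)]
    exact h1
  have hB := one_sub_le_prod S1 (fun l => 1 / (l:ℝ))
    (fun l hl => hx l (Finset.mem_of_mem_filter _ hl))
  have hB1 : ∏ l ∈ S1, (1 - 1 / (l:ℝ)) ≤ 1 := by
    apply Finset.prod_le_one
    · intro l hl; linarith [(hx l (Finset.mem_of_mem_filter _ hl)).2]
    · intro l hl; linarith [(hx l (Finset.mem_of_mem_filter _ hl)).1]
  have hA1 : ∏ l ∈ S2, (1 - 1 / (l:ℝ)) ≤ 1 := by
    apply Finset.prod_le_one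
    · intro l hl; linarith [(hx l (Finset.mem_of_mem_filter _ hl)).2]
    · intro l hl; linarith [(hx l (Finset.mem_of_mem_filter _ hl)).1]
  have hA0 : 0 ≤ ∏ l ∈ S2, (1 - 1 / (l:ℝ)) := by
    apply Finset.prod_nonneg
    intro l hl; linarith [(hx l (Finset.mem_of_mem_filter _ hl)).2]
  have hT : TY Y p = ∑ l ∈ S1, 1 / (l:ℝ) := rfl
  rw [hT]
  set A := ∏ l ∈ S2, (1 - 1 / (l:ℝ))
  set B := ∏ l ∈ S1, (1 - 1 / (l:ℝ))
  set t := ∑ l ∈ S1, 1 / (l:ℝ)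
  rw [abs_le]
  constructor <;> nlinarith

noncomputable def numF (g : ℤ) (h p : ℕ) : ℝ :=
  if jacobiSym g p = -1 ∧ Nat.gcd (p - 1) h = 1 then ((p - 1).totient : ℝ) / ((p:ℝ) - 1) else 0

noncomputable def denF (g : ℤ) (h p : ℕ) : ℝ :=
  if jacobiSym g p = -1 ∧ Nat.gcd (p - 1) h = 1 then 1 else 0

lemma J_ind {g g₁ m : ℤ} (hg0 : g ≠ 0) (hm : g = g₁ * m ^ 2) {p : ℕ} (hp : p.Prime)
    (hpg : g.natAbs < p) :
    (1 - (jacobiSym g₁ p : ℝ)) / 2 = if jacobiSym g p = -1 then 1 else 0 := by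
  have hcop : g.gcd p = 1 := by
    rw [Int.gcd, Int.natAbs_natCast]
    have hc : Nat.Coprime p g.natAbs := by
      rw [Nat.Prime.coprime_iff_not_dvd hp]
      intro hdv
      have := Nat.le_of_dvd (Int.natAbs_pos.2 hg0) hdv
      omega
    exact hc.symm
  have hcm : m.gcd p = 1 := by
    apply Int.isCoprime_iff_gcd_eq_one.1
    exact IsCoprime.of_isCoprime_of_dvd_left (Int.isCoprime_iff_gcd_eq_one.2 hcop)
      (by rw [hm]; exact Dvd.intro_left (g₁ * m) (by ring))
  have e : jacobiSym g p = jacobiSym g₁ p := by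
    rw [hm, jacobiSym.mul_left, jacobiSym.sq_one' hcm, mul_one]
  rcases jacobiSym.eq_one_or_neg_one hcop with h1 | h1
  · rw [← e, h1]; norm_num
  · rw [← e, h1]; norm_num

lemma aux_ineq (x : ℝ) (hx : 2 ≤ x) : |1 / (x * (x - 1))| ≤ 2 * (1 / x ^ 2) := by
  have h0 : 0 < x := by linarith
  have h1 : 0 < x - 1 := by linarith
  rw [abs_of_pos (by positivity), mul_one_div, div_le_div_iff₀ (by positivity) (by positivity)]
  nlinarith

lemma LY_tendsto (h : ℕ) : Tendsto (LY h) atTop (nhds (∏' p : Nat.Primes,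
    if (p : ℕ) ∣ h then (1 : ℝ) else 1 - 1 / (((p : ℕ) : ℝ) * (((p : ℕ) : ℝ) - 1)))) := by
  have hm : Multipliable (fun p : Nat.Primes =>
      if (p : ℕ) ∣ h then (1 : ℝ) else 1 - 1 / (((p : ℕ) : ℝ) * (((p : ℕ) : ℝ) - 1))) := by
    have hs : Summable (fun p : Nat.Primes =>
        if (p : ℕ) ∣ h then (0 : ℝ) else -(1 / (((p : ℕ) : ℝ) * (((p : ℕ) : ℝ) - 1)))) := by
      have h2 : Summable (fun n : ℕ => 2 * (1 / (n:ℝ) ^ 2)) :=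
        (Real.summable_one_div_nat_pow.2 (by norm_num)).mul_left 2
      have h3 := h2.comp_injective (i := fun p : Nat.Primes => (p : ℕ)) Subtype.coe_injective
      refine Summable.of_norm_bounded h3 ?_
      intro p
      have hp : (2:ℝ) ≤ (p : ℕ) := by exact_mod_cast p.2.two_le
      simp only [Function.comp]
      split_ifs
      · rw [norm_zero]; positivity
      · rw [norm_neg, Real.norm_eq_abs]
        exact aux_ineq _ hp
    have := Real.multipliable_one_add_of_summable hs
    convert this using 2 with p
    split_ifs <;> ring
  have hp := hm.hasProd
  have ht : Tendsto (fun Y => (PY Y).subtype Nat.Prime) atTop atTop := by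
    apply tendsto_atTop_finset_of_monotone
    · intro a b hab
      apply Finset.subtype_mono
      apply Finset.filter_subset_filter
      exact Finset.range_mono (by omega)
    · intro p
      refine ⟨p, ?_⟩
      rw [Finset.mem_subtype, PY, Finset.mem_filter, Finset.mem_range]
      exact ⟨by omega, p.2⟩
  have h4 := Tendsto.comp hp ht
  refine h4.congr ?_
  intro Y
  simp only [Function.comp, LY]
  exact Finset.prod_subtype_of_mem (p := Nat.Prime) (fun l : ℕ =>
    if l ∣ h then (1 : ℝ) else 1 - 1 / ((l : ℝ) * ((l : ℝ) - 1))) (fun x hx => PY_prime hx)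

lemma sum_nth (G : ℕ → ℝ) (N : ℕ) : ∑ i ∈ Finset.range N, G (Nat.nth Nat.Prime i) =
    ∑ p ∈ (Finset.range (Nat.nth Nat.Prime N)).filter Nat.Prime, G p := by
  induction N with
  | zero =>
    rw [Nat.nth_prime_zero_eq_two]
    have : (Finset.range 2).filter Nat.Prime = ∅ := by decide
    rw [this]; simp
  | succ N ih =>
    rw [Finset.sum_range_succ, ih,
      Nat.filter_range_nth_eq_insert_of_infinite Nat.infinite_setOfPred_prime,
      Finset.sum_insert (by simp), add_comm]

lemma main_lim (g g₁ m d : ℤ) (h k : ℕ) (ho : Odd h) (hg0 : g ≠ 0) (hm : g = g₁ * m ^ 2)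
    (hg₁ : Squarefree g₁) (h1 : g₁ ≠ 1) (hd : d = if g₁ % 4 = 1 then g₁ else 4 * g₁) :
    Tendsto (fun N => PS (numF g h) k N / PS (denF g h) k N) atTop
      (nhds ((∏' p : Nat.Primes, if (p : ℕ) ∣ h then (1 : ℝ) else
            1 - 1 / (((p : ℕ) : ℝ) * (((p : ℕ) : ℝ) - 1))) * Ad h d)) := by
  have hh : h ≠ 0 := by rintro rfl; simp at ho
  have hden : Dens (denF g h) (dl h g₁) := by
    refine (dens_den ho hg₁ (h + g₁.natAbs) (by omega) (by omega)).congr_large (g.natAbs + 1) ?_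
    intro p hp hpg
    rw [J_ind hg0 hm hp (by omega)]
    unfold denF
    by_cases hgc : Nat.gcd (p - 1) h = 1
    · rw [Fprod_cD hp hgc]
      simp [hgc]
    · rw [Fprod_zero _ hh (by omega) hp (fun l hl => by simp [cD, hl]) hgc]
      simp [hgc]
  have hD := dens_ratio hden k
  have hN : Tendsto (fun N => PS (numF g h) k N / PS (fun _ => 1) k N) atTop
      (nhds ((∏' p : Nat.Primes, if (p : ℕ) ∣ h then (1 : ℝ) else
            1 - 1 / (((p : ℕ) : ℝ) * (((p : ℕ) : ℝ) - 1))) * Ad h d * dl h g₁)) := by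
    apply lim_of_approx k (numF g h) (fun Y p => if p ≤ g.natAbs then numF g h p else
      (1 - (jacobiSym g₁ p : ℝ)) / 2 * Fprod (PY Y) (cN h) p) (fun Y => LY h Y * Ad h d * dl h g₁)
    · exact ((LY_tendsto h).mul_const _).mul_const _
    · filter_upwards [eventually_ge_atTop (h + g₁.natAbs)] with Y hY
      refine (dens_num ho hg₁ hd Y (by omega) (by omega)).congr_large (g.natAbs + 1) ?_
      intro p _ hpg
      rw [if_neg (by omega)]
    · filter_upwards [eventually_ge_atTop (h + g₁.natAbs)] with Y hY
      intro p hp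
      split_ifs with hpg
      · rw [sub_self, abs_zero]; exact TY_nonneg _ _
      · rw [J_ind hg0 hm hp (by omega)]
        unfold numF
        by_cases hgc : Nat.gcd (p - 1) h = 1
        · by_cases hJ : jacobiSym g p = -1
          · simp only [hgc, hJ, and_self, if_true, one_mul]
            exact approx hp hgc
          · simp only [hJ, false_and, if_false, zero_mul, sub_self, abs_zero]
            exact TY_nonneg _ _
        · rw [Fprod_zero _ hh (by omega) hp (fun l hl => by simp [cN, hl]) hgc]
          simp only [hgc, and_false, if_false, mul_zero, sub_self, abs_zero]
          exact TY_nonneg _ _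
  have hdl := dl_ne_zero ho h1
  have hq := hN.div hD hdl
  rw [mul_div_cancel_right₀ _ hdl] at hq
  refine hq.congr' ?_
  filter_upwards [W_pos k] with N hW
  simp only [Pi.div_apply]
  rw [div_div_div_cancel_right₀ hW.ne']

end Final

end ArtinRatio

open ArtinRatio
theorem artin_ratio_formula_power (g : ℤ) (hg : 1 < |g|) (hsq : ¬ IsSquare g)
    (g₀ : ℤ) (h : ℕ) (hgh : g = g₀ ^ h)
    (hmax : ∀ (b : ℤ) (m : ℕ), g = b ^ m → m ≤ h) (hh : 1 < h)
    (g₁ : ℤ) (hg₁ : Squarefree g₁) (hker : ∃ m : ℤ, g = g₁ * m ^ 2)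
    (d : ℤ) (hd : d = if g₁ % 4 = 1 then g₁ else 4 * g₁)
    (k : ℕ) :
    Tendsto (fun N : ℕ =>
        (∑ i ∈ (Finset.range N).filter (fun i =>
            @legendreSym (Nat.nth Nat.Prime i) ⟨Nat.prime_nth_prime i⟩ g = -1 ∧
            Nat.gcd (Nat.nth Nat.Prime i - 1) h = 1),
          (Nat.nth Nat.Prime i : ℝ) ^ k * ((Nat.nth Nat.Prime i - 1).totient : ℝ)) /
        (∑ i ∈ (Finset.range N).filter (fun i =>
            @legendreSym (Nat.nth Nat.Prime i) ⟨Nat.prime_nth_prime i⟩ g = -1 ∧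
            Nat.gcd (Nat.nth Nat.Prime i - 1) h = 1),
          (Nat.nth Nat.Prime i : ℝ) ^ k * ((Nat.nth Nat.Prime i : ℝ) - 1)))
      atTop
      (nhds (
        -- Ã_h : the product over primes not dividing h
        (∏' p : Nat.Primes, if (p : ℕ) ∣ h then (1 : ℝ) else
            1 - 1 / (((p : ℕ) : ℝ) * (((p : ℕ) : ℝ) - 1))) *
        -- Ã_d
        (if d ∣ (h : ℤ) then (1 : ℝ) else
          1 - (ArithmeticFunction.moebius d.natAbs : ℝ) *
            (∏ q ∈ d.natAbs.primeFactors.filter (fun q => q ∣ h), (1 / ((q : ℝ) - 2))) *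
            (∏ q ∈ d.natAbs.primeFactors.filter (fun q => ¬ q ∣ h),
              (1 / ((q : ℝ) ^ 2 - q - 1)))))) := by
  obtain ⟨m, hm⟩ := hker
  have hg0 : g ≠ 0 := by rintro rfl; simp at hg
  have ho : Odd h := by
    rw [← Nat.not_even_iff_odd]
    rintro ⟨t, ht⟩
    exact hsq ⟨g₀ ^ t, by rw [hgh, ht, pow_add]⟩
  have h1 : g₁ ≠ 1 := by
    rintro rfl
    exact hsq ⟨m, by rw [hm]; ring⟩
  have hlim := main_lim g g₁ m d h k ho hg0 hm hg₁ h1 hd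
  have hM : Tendsto (fun N : ℕ => Nat.nth Nat.Prime N - 1) atTop atTop := by
    apply tendsto_atTop_mono (f := fun N => N) _ tendsto_id
    intro N
    have := Nat.add_two_le_nth_prime N
    omega
  refine (hlim.comp hM).congr ?_
  intro N
  have hN1 : Nat.nth Nat.Prime N - 1 + 1 = Nat.nth Nat.Prime N := by
    have := Nat.add_two_le_nth_prime N
    omega
  simp only [Function.comp, PS, hN1, ← sum_nth, Finset.sum_filter]
  have hp1 : ∀ i, ((Nat.nth Nat.Prime i : ℕ) : ℝ) - 1 ≠ 0 := by
    intro i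
    have : (1:ℝ) < (Nat.nth Nat.Prime i : ℕ) := by
      exact_mod_cast (Nat.prime_nth_prime i).one_lt
    linarith
  congr 1
  · rw [← Finset.sum_filter, ← Finset.sum_filter, ← sum_nth (fun p => numF g h p * ((p : ℝ) ^ k * ((p : ℝ) - 1))), Finset.sum_filter]
    apply Finset.sum_congr rfl
    intro i _
    have := hp1 i
    simp only [numF, jacobiSym.legendreSym.to_jacobiSym]
    split_ifs
    · field_simp
    · simp
  · rw [← Finset.sum_filter, ← Finset.sum_filter, ← sum_nth (fun p => denF g h p * ((p : ℝ) ^ k * ((p : ℝ) - 1))), Finset.sum_filter]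
    apply Finset.sum_congr rfl
    intro i _
    have := hp1 i
    simp only [denF, jacobiSym.legendreSym.to_jacobiSym]
    split_ifs
    · simp
    · simp
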